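/- arXiv:1911.04349 — 3 statements merged into one kernel-verified Lean document; each statement's English description precedes it below -/
import Mathlib

section
/- Fix α with 1/2 < α < 1 and let s₁ > (1−α)/2. Then there exists C > 0 such that for every μ ∈ ℤ, all nonnegative sequences ω⁽¹⁾, ω⁽²⁾, ω⁽³⁾ : ℤ → [0,∞), and every j ∈ {1,2,3}: sup_{n ∈ ℤ} Σ_{(n₁,n₂,n₃) ∈ Γ_n^N, |Φ − μ| < 1} ω⁽¹⁾_{n₁} ω⁽²⁾_{n₂} ω⁽³⁾_{n₃} ≤ C (sup_{m ∈ ℤ} ω⁽ʲ⁾_m) ∏_{l ∈ {1,2,3}, l ≠ j} ‖ω⁽ˡ⁾‖_{ℓ²_{s₁}}. -/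
open scoped ENNReal NNReal

/-- `⟨n⟩ = (1+n²)^{1/2}`. -/
noncomputable def jbZ (n : ℤ) : ℝ := Real.sqrt (1 + (n : ℝ) ^ 2)

/-- The weighted `ℓ²_s(ℤ)` norm (valued in `[0,∞]`). -/
noncomputable def l2sZ (s : ℝ) (ω : ℤ → ℝ≥0) : ℝ≥0∞ :=
  (∑' n : ℤ, ENNReal.ofReal (jbZ n ^ (2 * s)) * ((ω n : ℝ≥0∞)) ^ 2) ^ (1/2 : ℝ)

/-- `Φ = |n|^{2α} - |n₁|^{2α} + |n₂|^{2α} - |n₃|^{2α}`. -/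
noncomputable def PhiFrac (α : ℝ) (n n₁ n₂ n₃ : ℤ) : ℝ :=
  |(n : ℝ)| ^ (2 * α) - |(n₁ : ℝ)| ^ (2 * α) + |(n₂ : ℝ)| ^ (2 * α) - |(n₃ : ℝ)| ^ (2 * α)

/-- `(n₁,n₂,n₃) ∈ Γ_n^N`: `n₁ - n₂ + n₃ = n`, `|n₂-n₁| > |n₂|^{1-α}` and `|n₂-n₃| > |n₂|^{1-α}`. -/
noncomputable def GammaN (α : ℝ) (n n₁ n₂ n₃ : ℤ) : Prop :=
  n₁ - n₂ + n₃ = n ∧ (|n₂ - n₁| : ℝ) > |(n₂ : ℝ)| ^ (1 - α) ∧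
    (|n₂ - n₃| : ℝ) > |(n₂ : ℝ)| ^ (1 - α)

namespace FNLS

lemma convQ0 (α : ℝ) (hα : 1/2 < α) (hα' : α < 1) (R : ℝ) :
    ConvexOn ℝ (Set.Icc 0 R)
      (fun t : ℝ => t ^ (2*α) - (2*α*(2*α-1)*R^(2*α-2))/2 * t^2) ∧
    MonotoneOn
      (fun t : ℝ => t ^ (2*α) - (2*α*(2*α-1)*R^(2*α-2))/2 * t^2) (Set.Icc 0 R) := by
  set l := 2*α*(2*α-1)*R^(2*α-2) with hl
  have hc : ContinuousOn (fun t : ℝ => t ^ (2*α) - l/2 * t^2) (Set.Icc 0 R) := by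
    apply Continuous.continuousOn
    have := Real.continuous_rpow_const (q := 2*α) (by linarith)
    fun_prop
  have hd : ∀ x : ℝ, 0 < x → HasDerivAt (fun t : ℝ => t ^ (2*α) - l/2 * t^2)
      (2*α*x^(2*α-1) - l*x) x := by
    intro x hx
    have h1 := Real.hasDerivAt_rpow_const (x := x) (p := 2*α) (Or.inl hx.ne')
    have h2 := ((hasDerivAt_id x).pow 2).const_mul (l/2)
    refine (h1.sub h2).congr_deriv ?_
    simp; ring
  have hd2 : ∀ x : ℝ, 0 < x → HasDerivAt (fun t : ℝ => 2*α*t ^ (2*α-1) - l * t)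
      (2*α*((2*α-1)*x^(2*α-2)) - l) x := by
    intro x hx
    have h1 := (Real.hasDerivAt_rpow_const (x := x) (p := 2*α-1) (Or.inl hx.ne')).const_mul (2*α)
    have h2 := (hasDerivAt_id x).const_mul l
    refine (h1.sub h2).congr_deriv ?_
    rw [show 2*α-1-1 = 2*α-2 by ring]; simp
  have hkey : ∀ x ∈ Set.Ioo 0 R, l ≤ 2*α*((2*α-1)*x^(2*α-2)) := by
    intro x hx
    have : R^(2*α-2) ≤ x^(2*α-2) :=
      Real.rpow_le_rpow_of_nonpos hx.1 hx.2.le (by linarith)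
    rw [hl, ← mul_assoc]
    apply mul_le_mul_of_nonneg_left this
    apply mul_nonneg <;> linarith
  constructor
  · refine convexOn_of_hasDerivWithinAt2_nonneg (f' := fun x => 2*α*x^(2*α-1) - l*x)
      (f'' := fun x => 2*α*((2*α-1)*x^(2*α-2)) - l) (convex_Icc 0 R) hc ?_ ?_ ?_
    · intro x hx; rw [interior_Icc] at hx ⊢; exact (hd x hx.1).hasDerivWithinAt
    · intro x hx; rw [interior_Icc] at hx ⊢; exact (hd2 x hx.1).hasDerivWithinAt
    · intro x hx; rw [interior_Icc] at hx; linarith [hkey x hx]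
  · refine monotoneOn_of_hasDerivWithinAt_nonneg (f' := fun x => 2*α*x^(2*α-1) - l*x)
      (convex_Icc 0 R) hc ?_ ?_
    · intro x hx; rw [interior_Icc] at hx ⊢; exact (hd x hx.1).hasDerivWithinAt
    · intro x hx; rw [interior_Icc] at hx
      have h1 := mul_le_mul_of_nonneg_right (hkey x hx) hx.1.le
      have h2 : x^(2*α-2) * x = x^(2*α-1) := by
        rw [← Real.rpow_add_one hx.1.ne']; congr 1; ring
      have h3 : 0 ≤ x^(2*α-1) := Real.rpow_nonneg hx.1.le _
      have h4 : 2*α*((2*α-1)*x^(2*α-2))*x = 2*α*((2*α-1)*x^(2*α-1)) := by rw [← h2]; ring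
      rw [h4] at h1
      nlinarith [mul_nonneg (by linarith : 0 ≤ α) h3, mul_nonneg (by linarith : 0 ≤ 1 - α) (mul_nonneg (by linarith : 0 ≤ α) h3)]

lemma convQ (α : ℝ) (hα : 1/2 < α) (hα' : α < 1) (R : ℝ) (hR : 0 < R) :
    ConvexOn ℝ (Set.Icc (-R) R)
      (fun t : ℝ => |t| ^ (2*α) - (2*α*(2*α-1)*R^(2*α-2))/2 * t^2) := by
  obtain ⟨h1, h2⟩ := convQ0 α hα hα' R
  have him : (fun t : ℝ => |t|) '' Set.Icc (-R) R ⊆ Set.Icc 0 R := by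
    rintro _ ⟨t, ht, rfl⟩
    exact ⟨abs_nonneg _, abs_le.mpr ht⟩
  have hab : ConvexOn ℝ (Set.Icc (-R) R) (fun t : ℝ => |t|) :=
    (convexOn_norm (convex_Icc (-R) R))
  refine ⟨convex_Icc _ _, ?_⟩
  intro x hx y hy a b ha hb hsum
  have hx' := him ⟨x, hx, rfl⟩
  have hy' := him ⟨y, hy, rfl⟩
  have hz' := him ⟨_, convex_Icc (-R) R hx hy ha hb hsum, rfl⟩
  have e1 := h1.2 hx' hy' ha hb hsum
  have e2 := h2 hz' (convex_Icc 0 R hx' hy' ha hb hsum) (hab.2 hx hy ha hb hsum)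
  have := e2.trans e1
  simpa only [sq_abs] using this

lemma convH (α : ℝ) (hα : 1/2 < α) :
    ConvexOn ℝ Set.univ (fun t : ℝ => |t| ^ (2*α)) := by
  have h1 := convexOn_rpow (p := 2*α) (by linarith)
  have hab : ConvexOn ℝ Set.univ (fun t : ℝ => |t|) := convexOn_norm convex_univ
  refine ⟨convex_univ, ?_⟩
  intro x hx y hy a b ha hb hsum
  have e1 := h1.2 (abs_nonneg x) (abs_nonneg y) ha hb hsum
  exact (Real.rpow_le_rpow (abs_nonneg _) (hab.2 hx hy ha hb hsum) (by linarith)).trans e1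

/-- three point inequality -/
lemma three_pt {S : Set ℝ} {f : ℝ → ℝ} (hf : ConvexOn ℝ S f) {x a b : ℝ}
    (ha : 0 ≤ a) (hb : 0 ≤ b) (hx : x ∈ S) (hy : x + a + b ∈ S) :
    (a+b) * f (x+a) ≤ b * f x + a * f (x+a+b) := by
  rcases eq_or_lt_of_le (add_nonneg ha hb) with h | h
  · have h1 : a = 0 := by linarith
    have h2 : b = 0 := by linarith
    simp [h1, h2]
  have := hf.2 hx hy (show 0 ≤ b/(a+b) by positivity) (show 0 ≤ a/(a+b) by positivity)
    (by field_simp; ring)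
  have e : (b/(a+b)) • x + (a/(a+b)) • (x+a+b) = x + a := by
    simp only [smul_eq_mul]; field_simp; ring
  rw [e] at this
  simp only [smul_eq_mul] at this
  have h3 := mul_le_mul_of_nonneg_left this h.le
  have e2 : (a+b) * (b/(a+b) * f x + a/(a+b) * f (x+a+b)) = b * f x + a * f (x+a+b) := by
    field_simp
  linarith

lemma second_diff {S : Set ℝ} {f : ℝ → ℝ} (hf : ConvexOn ℝ S f) {x a b : ℝ}
    (ha : 0 ≤ a) (hb : 0 ≤ b) (hx : x ∈ S) (hy : x + a + b ∈ S) :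
    f (x+a) + f (x+b) ≤ f x + f (x+a+b) := by
  rcases eq_or_lt_of_le (add_nonneg ha hb) with h | h
  · have h1 : a = 0 := by linarith
    have h2 : b = 0 := by linarith
    simp [h1, h2]
  have h1 := three_pt hf ha hb hx hy
  have h2 := three_pt hf hb ha hx (by rwa [add_right_comm])
  rw [add_right_comm x b a] at h2
  have : (a+b) * (f (x+a) + f (x+b)) ≤ (a+b) * (f x + f (x+a+b)) := by linarith
  exact le_of_mul_le_mul_left this h

lemma card_diam (F : Finset ℤ) (L : ℝ) (hL : 0 ≤ L)
    (h : ∀ u ∈ F, ∀ v ∈ F, u ≤ v → (v : ℝ) - u ≤ L) : (F.card : ℝ) ≤ L + 1 := by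
  rcases F.eq_empty_or_nonempty with rfl | hF
  · simp; linarith
  have h1 : F ⊆ Finset.Icc (F.min' hF) (F.max' hF) := fun x hx =>
    Finset.mem_Icc.mpr ⟨F.min'_le x hx, F.le_max' x hx⟩
  have h2 := Finset.card_le_card h1
  have h3 := h _ (F.min'_mem hF) _ (F.max'_mem hF) (F.min'_le_max' hF)
  have h4 : ((Finset.Icc (F.min' hF) (F.max' hF)).card : ℤ) = F.max' hF + 1 - F.min' hF := by
    rw [Int.card_Icc, Int.toNat_of_nonneg]
    linarith [F.min'_le_max' hF]
  have h5 : ((Finset.Icc (F.min' hF) (F.max' hF)).card : ℝ) = F.max' hF + 1 - F.min' hF := by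
    exact_mod_cast h4
  have h6 : (F.card : ℝ) ≤ ((Finset.Icc (F.min' hF) (F.max' hF)).card : ℝ) := by exact_mod_cast h2
  linarith

lemma card_triple (F : Finset ℤ) (D : ℝ) (hD : 0 ≤ D)
    (h : ∀ u ∈ F, ∀ v ∈ F, ∀ w ∈ F, u ≤ v → v ≤ w → ((v : ℝ) - u) * (w - v) ≤ D^2) :
    (F.card : ℝ) ≤ 2 * (D + 1) := by
  rcases F.eq_empty_or_nonempty with rfl | hF
  · simp; linarith
  set p := F.min' hF with hp
  set q := F.max' hF with hq
  have hsub : F ⊆ F.filter (fun v => (v:ℝ) - p ≤ D) ∪ F.filter (fun v => (q:ℝ) - v ≤ D) := by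
    intro v hv
    rw [Finset.mem_union, Finset.mem_filter, Finset.mem_filter]
    by_contra hcon
    push Not at hcon
    have h1 := hcon.1 hv
    have h2 := hcon.2 hv
    have := h p (F.min'_mem hF) v hv q (F.max'_mem hF) (F.min'_le v hv) (F.le_max' v hv)
    nlinarith
  have c1 := card_diam (F.filter (fun v => (v:ℝ) - p ≤ D)) D hD (by
    intro u hu v hv _
    rw [Finset.mem_filter] at hu hv
    have : (p:ℝ) ≤ u := by exact_mod_cast F.min'_le u hu.1
    linarith [hv.2])
  have c2 := card_diam (F.filter (fun v => (q:ℝ) - v ≤ D)) D hD (by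
    intro u hu v hv _
    rw [Finset.mem_filter] at hu hv
    have : (v:ℝ) ≤ q := by exact_mod_cast F.le_max' v hv.1
    linarith [hu.2])
  have c3 := (Finset.card_le_card hsub).trans (Finset.card_union_le _ _)
  have c4 : (F.card : ℝ) ≤ ((F.filter (fun v : ℤ => (v:ℝ) - p ≤ D)).card : ℝ)
     + (F.filter (fun v : ℤ => (q:ℝ) - v ≤ D)).card := by exact_mod_cast c3
  linarith

/-- Type II count. -/
lemma count_II (α : ℝ) (hα : 1/2 < α) (hα' : α < 1) :
    ∃ C : ℝ, 0 < C ∧ ∀ (m : ℝ) (N : ℝ) (_ : 1 ≤ N) (F : Finset ℤ),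
      (∀ u ∈ F, |(u:ℝ)| ≤ N) →
      (∀ u ∈ F, ∀ v ∈ F, (|(u:ℝ)|^(2*α) + |m - u|^(2*α)) - (|(v:ℝ)|^(2*α) + |m - v|^(2*α)) ≤ 2) →
      (F.card : ℝ) ≤ C * N^(1-α) := by
  set κ := 2*α*(2*α-1) with hκ
  have hκ0 : 0 < κ := by apply mul_pos <;> linarith
  refine ⟨2 * (Real.sqrt (4/κ) + 1), by positivity, ?_⟩
  intro m N hN F hFN hF
  have hN0 : 0 < N := by linarith
  have hN1 : 1 ≤ N^(1-α) := Real.one_le_rpow hN (by linarith)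
  have key := card_triple F (Real.sqrt (4/κ) * N^(1-α)) (by positivity) ?_
  · nlinarith
  intro u hu v hv w hw huv hvw
  have huv' : (u:ℝ) ≤ v := by exact_mod_cast huv
  have hvw' : (v:ℝ) ≤ w := by exact_mod_cast hvw
  rw [mul_pow, Real.sq_sqrt (by positivity)]
  have hQ := convQ α hα hα' N hN0
  rw [← hκ] at hQ
  have hlam : N^(2*α-2) * (N^(1-α))^2 = 1 := by
    rw [← Real.rpow_natCast (N^(1-α)), ← Real.rpow_mul hN0.le, ← Real.rpow_add hN0]
    rw [show 2*α-2 + (1-α)*((2:ℕ):ℝ) = 0 by push_cast; ring, Real.rpow_zero]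
  set P := N^(2*α-2) with hP
  have hP0 : 0 < P := Real.rpow_pos_of_pos hN0 _
  have e1 := three_pt hQ (x := u) (a := v - u) (b := w - v) (by linarith) (by linarith)
    (abs_le.mp (hFN u hu)) (by
      have := abs_le.mp (hFN w hw)
      rw [show (u:ℝ) + (v-u) + (w-v) = w by ring]; exact this)
  have hH : ConvexOn ℝ Set.univ (fun t : ℝ => |m - t|^(2*α)) := by
    refine ⟨convex_univ, ?_⟩
    intro x hx y hy a b ha hb hsum
    have := (convH α hα).2 (Set.mem_univ (m-x)) (Set.mem_univ (m-y)) ha hb hsum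
    have e : a • (m - x) + b • (m - y) = m - (a • x + b • y) := by
      simp only [smul_eq_mul]; linear_combination m * hsum
    rw [e] at this
    exact this
  have e2 := three_pt hH (x := u) (a := v - u) (b := w - v) (by linarith) (by linarith)
    trivial trivial
  rw [show (u:ℝ) + (v-u) + (w-v) = w by ring, show (u:ℝ)+(v-u) = v by ring] at e1 e2
  have f1 := hF u hu v hv
  have f2 := hF w hw v hv
  generalize |(u:ℝ)|^(2*α) = A1 at *
  generalize |(v:ℝ)|^(2*α) = A2 at *
  generalize |(w:ℝ)|^(2*α) = A3 at *
  generalize |m - (u:ℝ)|^(2*α) = B1 at *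
  generalize |m - (v:ℝ)|^(2*α) = B2 at *
  generalize |m - (w:ℝ)|^(2*α) = B3 at *
  have f1' := mul_le_mul_of_nonneg_left f1 (by linarith : (0:ℝ) ≤ w - v)
  have f2' := mul_le_mul_of_nonneg_left f2 (by linarith : (0:ℝ) ≤ v - u)
  have g : (κ * P / 2) * ((v-u)*(w-v)*((w:ℝ)-u)) ≤ 2 * (w-u) := by nlinarith
  rcases eq_or_lt_of_le (huv'.trans hvw') with h0 | h0
  · have : (v:ℝ) - u = 0 := by linarith
    rw [this, zero_mul]; positivity
  have g2 : (κ * P / 2) * ((v-u)*((w:ℝ)-v)) ≤ 2 := by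
    have : 0 < (w:ℝ) - u := by linarith
    refine le_of_mul_le_mul_right ?_ this
    linarith
  have hκP : 0 < κ * P := mul_pos hκ0 hP0
  have g3 : κ * P * (4/κ * (N^(1-α))^2) = 4 := by
    have : κ * P * (4/κ * (N^(1-α))^2) = 4 * (P * (N^(1-α))^2) := by field_simp
    rw [this, hlam]; ring
  refine le_of_mul_le_mul_left ?_ hκP
  rw [g3]; linarith

/-- Type I count with nonnegative k. -/
lemma count_I0 (α : ℝ) (hα : 1/2 < α) (hα' : α < 1) :
    ∃ C : ℝ, 0 < C ∧ ∀ (k : ℝ) (M : ℝ) (_ : 1 ≤ M) (_ : M^(1-α) ≤ k) (F : Finset ℤ),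
      (∀ u ∈ F, |(u:ℝ)| ≤ 2 * M) →
      (∀ u ∈ F, ∀ v ∈ F, (|(u:ℝ)|^(2*α) - |u + k|^(2*α)) - (|(v:ℝ)|^(2*α) - |v + k|^(2*α)) ≤ 2) →
      (F.card : ℝ) ≤ C * M^(1-α) := by
  set κ := 2*α*(2*α-1) * 3^(2*α-2) with hκ
  have hκ0 : 0 < κ := by
    have : (0:ℝ) < 3^(2*α-2) := by positivity
    apply mul_pos (mul_pos _ _) this <;> linarith
  refine ⟨2/κ + 1, by positivity, ?_⟩
  intro k M hM hk F hFN hF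
  have hM0 : 0 < M := by linarith
  have hM1 : 1 ≤ M^(1-α) := Real.one_le_rpow hM (by linarith)
  have hM2 : M^(1-α) ≤ M := by
    conv_rhs => rw [← Real.rpow_one M]
    exact Real.rpow_le_rpow_of_exponent_le hM (by linarith)
  have key := card_diam F (2/κ * M^(1-α)) (by positivity) ?_
  · nlinarith
  intro u hu v hv huv
  have huv' : (u:ℝ) ≤ v := by exact_mod_cast huv
  have hQ := convQ α hα hα' (3*M) (by linarith)
  have hlam : M^(2*α-2) * (M^(1-α))^2 = 1 := by
    rw [← Real.rpow_natCast (M^(1-α)), ← Real.rpow_mul hM0.le, ← Real.rpow_add hM0]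
    rw [show 2*α-2 + (1-α)*((2:ℕ):ℝ) = 0 by push_cast; ring, Real.rpow_zero]
  rw [Real.mul_rpow (by norm_num) hM0.le, ← mul_assoc, ← hκ] at hQ
  set P := M^(2*α-2) with hP
  have hP0 : 0 < P := Real.rpow_pos_of_pos hM0 _
  set b := M^(1-α) with hb
  have hu2 := abs_le.mp (hFN u hu)
  have hv2 := abs_le.mp (hFN v hv)
  have e1 := second_diff hQ (x := u) (a := v - u) (b := b) (by linarith) (by linarith)
    ⟨by linarith, by linarith⟩ ⟨by linarith, by linarith⟩
  have e2 := second_diff (convH α hα) (x := u + b) (a := v - u) (b := k - b) (by linarith)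
    (by linarith) trivial trivial
  rw [show (u:ℝ) + (v-u) = v by ring] at e1
  rw [show (u:ℝ) + b + (v-u) + (k-b) = v + k by ring, show (u:ℝ)+b+(v-u) = v+b by ring,
    show (u:ℝ)+b+(k-b) = u+k by ring] at e2
  have f1 := hF u hu v hv
  have g : κ * P * b * (v - u) ≤ 2 := by nlinarith
  have hκP : 0 < κ * P * b := by positivity
  refine le_of_mul_le_mul_left ?_ hκP
  have g3 : κ * P * b * (2/κ * b) = 2 := by
    have : κ * P * b * (2/κ * b) = 2 * (P * b^2) := by field_simp
    rw [this, hlam]; ring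
  rw [g3]; exact g

lemma count_I1 (α : ℝ) (hα : 1/2 < α) (hα' : α < 1) :
    ∃ C : ℝ, 0 < C ∧ ∀ (k : ℝ) (M : ℝ) (_ : 1 ≤ M) (_ : M^(1-α) ≤ |k|) (F : Finset ℤ),
      (∀ u ∈ F, |(u:ℝ)| ≤ 2 * M) →
      (∀ u ∈ F, ∀ v ∈ F, (|(u:ℝ)|^(2*α) - |u + k|^(2*α)) - (|(v:ℝ)|^(2*α) - |v + k|^(2*α)) ≤ 2) →
      (F.card : ℝ) ≤ C * M^(1-α) := by
  obtain ⟨C, hC, h⟩ := count_I0 α hα hα'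
  refine ⟨C, hC, ?_⟩
  intro k M hM hk F hFN hF
  rcases le_total 0 k with h0 | h0
  · exact h k M hM (by rwa [abs_of_nonneg h0] at hk) F hFN hF
  have := h (-k) M hM (by rwa [abs_of_nonpos h0] at hk) (F.image (fun u => -u)) ?_ ?_
  · rwa [Finset.card_image_of_injective _ neg_injective] at this
  · intro u hu
    obtain ⟨u, hux, rfl⟩ := Finset.mem_image.mp hu
    push_cast; rw [abs_neg]; exact hFN u hux
  · intro u hu v hv
    obtain ⟨u, hux, rfl⟩ := Finset.mem_image.mp hu
    obtain ⟨v, hvx, rfl⟩ := Finset.mem_image.mp hv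
    push_cast
    rw [← neg_add, ← neg_add]; simp only [abs_neg]
    exact hF u hux v hvx

/-- Type I count. -/
lemma count_I (α : ℝ) (hα : 1/2 < α) (hα' : α < 1) :
    ∃ C : ℝ, 0 < C ∧ ∀ (k : ℤ) (N : ℝ) (_ : 1 ≤ N) (F : Finset ℤ),
      (∀ u ∈ F, |(u:ℝ)| ≤ N) →
      (∀ u ∈ F, |(u:ℝ)|^(1-α) < |(k:ℝ)| ∨ |(u:ℝ) + k|^(1-α) < |(k:ℝ)|) →
      (∀ u ∈ F, ∀ v ∈ F, (|(u:ℝ)|^(2*α) - |u + (k:ℝ)|^(2*α)) -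
        (|(v:ℝ)|^(2*α) - |v + (k:ℝ)|^(2*α)) ≤ 2) →
      (F.card : ℝ) ≤ C * N^(1-α) := by
  obtain ⟨C, hC, h⟩ := count_I1 α hα hα'
  refine ⟨C, hC, ?_⟩
  intro k N hN F hFN hFk hF
  have hα1 : 0 < 1 - α := by linarith
  by_cases hkN : N^(1-α) ≤ |(k:ℝ)|
  · exact h k N hN hkN F (fun u hu => (hFN u hu).trans (by linarith)) hF
  push Not at hkN
  rcases F.eq_empty_or_nonempty with rfl | ⟨u0, hu0⟩
  · simp; positivity
  have hk0 : k ≠ 0 := by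
    rintro rfl
    have a1 := Real.rpow_nonneg (abs_nonneg (u0:ℝ)) (1-α)
    rcases hFk u0 hu0 with h1 | h1 <;> simp at h1 <;> linarith
  have hk1 : (1:ℝ) ≤ |(k:ℝ)| := by exact_mod_cast Int.one_le_abs hk0
  set M := |(k:ℝ)|^(1/(1-α)) with hM
  have hMk : M^(1-α) = |(k:ℝ)| := by
    rw [hM, ← Real.rpow_mul (abs_nonneg _), one_div, inv_mul_cancel₀ hα1.ne', Real.rpow_one]
  have hM1 : 1 ≤ M := Real.one_le_rpow hk1 (by positivity)
  have hkM : |(k:ℝ)| ≤ M := by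
    conv_lhs => rw [← Real.rpow_one |(k:ℝ)|]
    apply Real.rpow_le_rpow_of_exponent_le hk1
    rw [le_div_iff₀ hα1]; linarith
  have hlt : ∀ t : ℝ, |t|^(1-α) < |(k:ℝ)| → |t| ≤ M := by
    intro t ht
    rw [← hMk] at ht
    exact ((Real.rpow_lt_rpow_iff (abs_nonneg t) (by linarith) hα1).mp ht).le
  have := h k M hM1 hMk.le F ?_ hF
  · refine this.trans ?_
    rw [hMk]; exact mul_le_mul_of_nonneg_left hkN.le hC.le
  intro u hu
  rcases hFk u hu with h1 | h1
  · linarith [hlt _ h1]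
  · have := hlt _ h1
    have h3 : |(u:ℝ)| ≤ |(u:ℝ) + k| + |(k:ℝ)| := by
      have := abs_sub ((u:ℝ)+k) k
      simpa using this
    linarith

end FNLS

namespace FNLS

lemma one_le_jb (n : ℤ) : 1 ≤ jbZ n := by
  unfold jbZ; rw [Real.one_le_sqrt]; nlinarith [sq_nonneg (n:ℝ)]

lemma abs_le_jb (n : ℤ) : |(n:ℝ)| ≤ jbZ n := by
  unfold jbZ; apply Real.le_sqrt_of_sq_le; rw [sq_abs]; linarith

lemma sum_bound (β s C : ℝ) (hs : 0 < s) (hβ : β < 2*s) (hC : 0 < C) :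
    ∃ K : ℝ, 0 < K ∧ ∀ A : Set ℤ,
      (∀ N : ℝ, 1 ≤ N → ∀ F : Finset ℤ, (∀ u ∈ F, u ∈ A) → (∀ u ∈ F, |(u:ℝ)| ≤ N) →
        (F.card : ℝ) ≤ C * N^β) →
      ∑' y : A, ENNReal.ofReal (jbZ y ^ (-(2*s))) ≤ ENNReal.ofReal K := by
  set r : ℝ := 2^(β - 2*s) with hr
  have hr0 : 0 < r := by positivity
  have hr1 : r < 1 := Real.rpow_lt_one_of_one_lt_of_neg (by norm_num) (by linarith)
  set D : ℝ := C * 2^(2*s) with hD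
  have hD0 : 0 < D := by positivity
  have hsum : Summable (fun j : ℕ => D * r^j) := (summable_geometric_of_lt_one hr0.le hr1).mul_left D
  refine ⟨∑' j : ℕ, D * r^j, hsum.tsum_pos (fun j => by positivity) 0 (by positivity), ?_⟩
  intro A hA
  set c : ℕ → ℝ := fun j => 2^(2*s) * ((2:ℝ)^j)^(-(2*s)) with hc
  have hc0 : ∀ j, 0 < c j := fun j => by positivity
  have hpt : ∀ y : A, ENNReal.ofReal (jbZ y ^ (-(2*s))) ≤
      ∑' j : ℕ, if |((y:ℤ):ℝ)| ≤ 2^j then ENNReal.ofReal (c j) else 0 := by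
    intro y
    obtain ⟨j, hj1, hj2⟩ := exists_nat_pow_near (one_le_jb y) (one_lt_two)
    refine le_trans ?_ (ENNReal.le_tsum (j+1))
    rw [if_pos ((abs_le_jb y).trans hj2.le)]
    apply ENNReal.ofReal_le_ofReal
    have e : c (j+1) = ((2:ℝ)^j)^(-(2*s)) := by
      rw [hc]
      simp only
      rw [pow_succ, Real.mul_rpow (by positivity) (by norm_num), mul_left_comm,
        ← Real.rpow_add (by norm_num)]
      simp
    rw [e]
    exact Real.rpow_le_rpow_of_nonpos (by positivity) hj1 (by linarith)
  have hj : ∀ j : ℕ, (∑' y : A, if |((y:ℤ):ℝ)| ≤ 2^j then ENNReal.ofReal (c j) else 0) ≤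
      ENNReal.ofReal (D * r^j) := by
    intro j
    rw [ENNReal.tsum_eq_iSup_sum]
    apply iSup_le
    intro G
    rw [← Finset.sum_filter, Finset.sum_const, nsmul_eq_mul]
    have h1 := hA (2^j) (one_le_pow₀ (by norm_num))
      ((G.filter (fun y : A => |((y:ℤ):ℝ)| ≤ 2^j)).map (Function.Embedding.subtype _))
      (by
        intro u hu
        obtain ⟨y, _, rfl⟩ := Finset.mem_map.mp hu
        exact y.2)
      (by
        intro u hu
        obtain ⟨y, hy, rfl⟩ := Finset.mem_map.mp hu
        exact (Finset.mem_filter.mp hy).2)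
    rw [Finset.card_map] at h1
    rw [← ENNReal.ofReal_natCast, ← ENNReal.ofReal_mul (by positivity)]
    apply ENNReal.ofReal_le_ofReal
    refine (mul_le_mul_of_nonneg_right h1 (hc0 j).le).trans (le_of_eq ?_)
    have e : r^j = ((2:ℝ)^j)^β * ((2:ℝ)^j)^(-(2*s)) := by
      rw [← Real.rpow_add (by positivity), hr, ← Real.rpow_natCast, ← Real.rpow_natCast,
        ← Real.rpow_mul (by norm_num), ← Real.rpow_mul (by norm_num)]
      congr 1; ring
    rw [e, hD, hc]; ring
  calc _ ≤ ∑' y : A, ∑' j : ℕ, (if |((y:ℤ):ℝ)| ≤ 2^j then ENNReal.ofReal (c j) else 0) :=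
        ENNReal.tsum_le_tsum hpt
    _ = ∑' j : ℕ, ∑' y : A, (if |((y:ℤ):ℝ)| ≤ 2^j then ENNReal.ofReal (c j) else 0) :=
        ENNReal.tsum_comm
    _ ≤ ∑' j : ℕ, ENNReal.ofReal (D * r^j) := ENNReal.tsum_le_tsum hj
    _ = _ := (ENNReal.ofReal_tsum_of_nonneg (fun j => by positivity) hsum).symm

lemma cs_tsum {ι : Type*} (f g : ι → ℝ≥0∞) :
    ∑' i, f i * g i ≤ (∑' i, f i ^ 2)^(1/2:ℝ) * (∑' i, g i ^ 2)^(1/2:ℝ) := by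
  rw [ENNReal.tsum_eq_iSup_sum]
  apply iSup_le
  intro G
  have h := ENNReal.inner_le_Lp_mul_Lq G f g Real.HolderConjugate.two_two
  refine h.trans ?_
  simp only [ENNReal.rpow_two]
  gcongr <;> exact ENNReal.sum_le_tsum G

lemma cs_half {ι : Type*} (x y : ι → ℤ) (inj : ∀ p q, x p = x q → y p = y q → p = q)
    (s K : ℝ) (u : ℤ → ℝ≥0)
    (h : ∀ a, ∃ A : Set ℤ, (∀ p, x p = a → y p ∈ A) ∧
      ∑' b : A, ENNReal.ofReal (jbZ b ^ (-(2*s))) ≤ ENNReal.ofReal K) :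
    ∑' p, ((u (x p) : ℝ≥0∞) * (ENNReal.ofReal (jbZ (x p) ^ s) *
      ENNReal.ofReal (jbZ (y p) ^ (-s))))^2 ≤
    ENNReal.ofReal K * ∑' a, ENNReal.ofReal (jbZ a ^ (2 * s)) * ((u a : ℝ≥0∞)) ^ 2 := by
  have hj0 : ∀ a, 0 < jbZ a := fun a => lt_of_lt_of_le one_pos (one_le_jb a)
  have hsq : ∀ a (t : ℝ), ENNReal.ofReal (jbZ a ^ t)^2 = ENNReal.ofReal (jbZ a ^ (2*t)) := by
    intro a t
    rw [← ENNReal.ofReal_pow (Real.rpow_nonneg (hj0 a).le _), ← Real.rpow_natCast,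
      ← Real.rpow_mul (hj0 a).le]
    congr 2; push_cast; ring
  rw [← ENNReal.tsum_fiberwise _ x, ← ENNReal.tsum_mul_left]
  apply ENNReal.tsum_le_tsum
  intro a
  obtain ⟨A, hA, hK⟩ := h a
  have e : ∀ p : (x ⁻¹' {a}), ((u (x p) : ℝ≥0∞) * (ENNReal.ofReal (jbZ (x p) ^ s) *
      ENNReal.ofReal (jbZ (y p) ^ (-s))))^2 = (ENNReal.ofReal (jbZ a ^ (2 * s)) * ((u a : ℝ≥0∞)) ^ 2)
       * ENNReal.ofReal (jbZ (y p) ^ (-(2*s))) := by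
    rintro ⟨p, hp⟩
    have hp' : x p = a := hp
    simp only [hp']
    rw [mul_pow, mul_pow, hsq, hsq, show 2 * -s = -(2*s) by ring]; ring
  rw [tsum_congr e, ENNReal.tsum_mul_left, mul_comm]
  gcongr
  refine le_trans ?_ hK
  let i : (x ⁻¹' {a}) → A := fun p => ⟨y p, hA p p.2⟩
  have hi : Function.Injective i := by
    rintro ⟨p, hp⟩ ⟨q, hq⟩ hpq
    have hp' : x p = a := hp
    have hq' : x q = a := hq
    have : y p = y q := congrArg Subtype.val hpq
    exact Subtype.ext (inj p q (hp'.trans hq'.symm) this)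
  exact ENNReal.tsum_comp_le_tsum_of_injective hi
    (fun b : A => ENNReal.ofReal (jbZ b ^ (-(2*s))))

lemma cs_main {ι : Type*} (x y : ι → ℤ) (inj : ∀ p q, x p = x q → y p = y q → p = q)
    (s K : ℝ) (u v : ℤ → ℝ≥0)
    (h : ∀ a, ∃ A : Set ℤ, (∀ p, x p = a → y p ∈ A) ∧
      ∑' b : A, ENNReal.ofReal (jbZ b ^ (-(2*s))) ≤ ENNReal.ofReal K)
    (hh : ∀ a, ∃ A : Set ℤ, (∀ p, y p = a → x p ∈ A) ∧
      ∑' b : A, ENNReal.ofReal (jbZ b ^ (-(2*s))) ≤ ENNReal.ofReal K) :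
    ∑' p, (u (x p) : ℝ≥0∞) * (v (y p) : ℝ≥0∞) ≤ ENNReal.ofReal K * (l2sZ s u * l2sZ s v) := by
  have hj0 : ∀ a, 0 < jbZ a := fun a => lt_of_lt_of_le one_pos (one_le_jb a)
  have hinv : ∀ a, ENNReal.ofReal (jbZ a ^ s) * ENNReal.ofReal (jbZ a ^ (-s)) = 1 := by
    intro a
    rw [← ENNReal.ofReal_mul (Real.rpow_nonneg (hj0 a).le _), ← Real.rpow_add (hj0 a)]
    simp
  have e : ∀ p, (u (x p) : ℝ≥0∞) * (v (y p) : ℝ≥0∞) =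
      ((u (x p) : ℝ≥0∞) * (ENNReal.ofReal (jbZ (x p) ^ s) * ENNReal.ofReal (jbZ (y p) ^ (-s)))) *
      ((v (y p) : ℝ≥0∞) * (ENNReal.ofReal (jbZ (y p) ^ s) * ENNReal.ofReal (jbZ (x p) ^ (-s)))) := by
    intro p
    have h1 := hinv (x p)
    have h2 := hinv (y p)
    generalize ENNReal.ofReal (jbZ (x p) ^ s) = a1 at *
    generalize ENNReal.ofReal (jbZ (x p) ^ (-s)) = a2 at *
    generalize ENNReal.ofReal (jbZ (y p) ^ s) = b1 at *
    generalize ENNReal.ofReal (jbZ (y p) ^ (-s)) = b2 at *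
    calc _ = (u (x p) : ℝ≥0∞) * (v (y p) : ℝ≥0∞) * (a1 * a2) * (b1 * b2) := by
          rw [h1, h2, mul_one, mul_one]
      _ = _ := by ring
  rw [tsum_congr e]
  refine (cs_tsum _ _).trans ?_
  have c1 := cs_half x y inj s K u h
  have c2 := cs_half y x (fun p q a b => inj p q b a) s K v hh
  refine (mul_le_mul' (ENNReal.rpow_le_rpow c1 (by norm_num : (0:ℝ) ≤ 1/2))
    (ENNReal.rpow_le_rpow c2 (by norm_num : (0:ℝ) ≤ 1/2))).trans (le_of_eq ?_)
  rw [ENNReal.mul_rpow_of_nonneg _ _ (by norm_num : (0:ℝ) ≤ 1/2),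
    ENNReal.mul_rpow_of_nonneg _ _ (by norm_num : (0:ℝ) ≤ 1/2)]
  have hK : (ENNReal.ofReal K)^(1/2:ℝ) * (ENNReal.ofReal K)^(1/2:ℝ) = ENNReal.ofReal K := by
    rw [← ENNReal.rpow_add_of_nonneg _ _ (by norm_num) (by norm_num)]; norm_num
  unfold l2sZ
  conv_rhs => rw [← hK]
  ring

/-- The index condition. -/
def PP (α : ℝ) (μ n n₁ n₂ n₃ : ℤ) : Prop :=
  GammaN α n n₁ n₂ n₃ ∧ |PhiFrac α n n₁ n₂ n₃ - (μ : ℝ)| < 1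

lemma PP.symm {α : ℝ} {μ n n₁ n₂ n₃ : ℤ} (h : PP α μ n n₁ n₂ n₃) : PP α μ n n₃ n₂ n₁ := by
  obtain ⟨⟨h1, h2, h3⟩, h4⟩ := h
  refine ⟨⟨by linarith, h3, h2⟩, ?_⟩
  unfold PhiFrac at *
  convert h4 using 2
  ring

lemma fibres (α : ℝ) (hα : 1/2 < α) (hα' : α < 1)
    (s₁ : ℝ) (hs₁ : (1 - α) / 2 < s₁) :
    ∃ K : ℝ, 0 < K ∧ ∀ μ n a : ℤ,
      (∑' b : {b : ℤ | ∃ n₁, PP α μ n n₁ b a}, ENNReal.ofReal (jbZ b ^ (-(2*s₁))) ≤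
        ENNReal.ofReal K) ∧
      (∑' b : {b : ℤ | ∃ n₂, PP α μ n b n₂ a}, ENNReal.ofReal (jbZ b ^ (-(2*s₁))) ≤
        ENNReal.ofReal K) ∧
      (∑' b : {b : ℤ | ∃ n₁, PP α μ n n₁ a b}, ENNReal.ofReal (jbZ b ^ (-(2*s₁))) ≤
        ENNReal.ofReal K) := by
  obtain ⟨C1, hC1, H1⟩ := count_I α hα hα'
  obtain ⟨C2, hC2, H2⟩ := count_II α hα hα'
  obtain ⟨K, hK, H⟩ := sum_bound (1-α) s₁ (C1 + C2) (by linarith) (by linarith) (by linarith)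
  refine ⟨K, hK, fun μ n a => ⟨?_, ?_, ?_⟩⟩
  · apply H
    intro N hN F hFA hFN
    have hN0 : 0 ≤ N^(1-α) := Real.rpow_nonneg (by linarith) _
    have := H1 (n - a) N hN F hFN ?_ ?_
    · nlinarith
    · intro u hu
      obtain ⟨n₁, ⟨h1, h2, h3⟩, h4⟩ := hFA u hu
      have e : (n₁:ℝ) = u + (n - a) := by exact_mod_cast (by linarith : n₁ = u + (n - a))
      left
      rw [e] at h2
      rw [show (u:ℝ) - (u + (n - a)) = -(n - a) by ring, abs_neg] at h2
      push_cast; exact h2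
    · intro u hu v hv
      obtain ⟨n₁, ⟨h1, h2, h3⟩, h4⟩ := hFA u hu
      obtain ⟨m₁, ⟨g1, g2, g3⟩, g4⟩ := hFA v hv
      have e : (n₁:ℝ) = u + ((n - a : ℤ):ℝ) := by exact_mod_cast (by linarith : n₁ = u + (n - a))
      have ee : (m₁:ℝ) = v + ((n - a : ℤ):ℝ) := by exact_mod_cast (by linarith : m₁ = v + (n - a))
      unfold PhiFrac at h4 g4
      rw [e] at h4
      rw [ee] at g4
      rw [abs_lt] at h4 g4
      linarith [h4.1, h4.2, g4.1, g4.2]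
  · apply H
    intro N hN F hFA hFN
    have hN0 : 0 ≤ N^(1-α) := Real.rpow_nonneg (by linarith) _
    have := H1 (a - n) N hN F hFN ?_ ?_
    · nlinarith
    · intro u hu
      obtain ⟨n₂, ⟨h1, h2, h3⟩, h4⟩ := hFA u hu
      have e : (n₂:ℝ) = u + (a - n) := by exact_mod_cast (by linarith : n₂ = u + (a - n))
      right
      rw [e] at h2
      rw [show (u:ℝ) + (a - n) - u = (a - n) by ring] at h2
      push_cast; exact h2
    · intro u hu v hv
      obtain ⟨n₂, ⟨h1, h2, h3⟩, h4⟩ := hFA u hu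
      obtain ⟨m₂, ⟨g1, g2, g3⟩, g4⟩ := hFA v hv
      have e : (n₂:ℝ) = u + ((a - n : ℤ):ℝ) := by exact_mod_cast (by linarith : n₂ = u + (a - n))
      have ee : (m₂:ℝ) = v + ((a - n : ℤ):ℝ) := by exact_mod_cast (by linarith : m₂ = v + (a - n))
      unfold PhiFrac at h4 g4
      rw [e] at h4
      rw [ee] at g4
      rw [abs_lt] at h4 g4
      linarith [h4.1, h4.2, g4.1, g4.2]
  · apply H
    intro N hN F hFA hFN
    have hN0 : 0 ≤ N^(1-α) := Real.rpow_nonneg (by linarith) _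
    have := H2 ((n + a : ℤ) : ℝ) N hN F hFN ?_
    · nlinarith
    · intro u hu v hv
      obtain ⟨n₁, ⟨h1, h2, h3⟩, h4⟩ := hFA u hu
      obtain ⟨m₁, ⟨g1, g2, g3⟩, g4⟩ := hFA v hv
      have e : (n₁:ℝ) = ((n + a : ℤ):ℝ) - u := by exact_mod_cast (by linarith : n₁ = (n + a) - u)
      have ee : (m₁:ℝ) = ((n + a : ℤ):ℝ) - v := by exact_mod_cast (by linarith : m₁ = (n + a) - v)
      unfold PhiFrac at h4 g4
      rw [e] at h4
      rw [ee] at g4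
      rw [abs_lt] at h4 g4
      linarith [h4.1, h4.2, g4.1, g4.2]

end FNLS


/-- The estimate (B2) for the cubic fractional NLS: for `1/2 < α < 1`,
`s₁ > (1-α)/2`, and each `j ∈ {1,2,3}`, the `ℓ^∞` norm of the trilinear form restricted to
`Γ_n^N ∩ {|Φ-μ|<1}` is bounded by `C (sup ω⁽ʲ⁾) ∏_{l≠j} ‖ω⁽ˡ⁾‖_{ℓ²_{s₁}}`, uniformly in `μ`. -/
theorem fractional_NLS_B2 (α : ℝ) (hα : 1/2 < α) (hα' : α < 1)
    (s₁ : ℝ) (hs₁ : (1 - α) / 2 < s₁) :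
    ∃ C : ℝ, 0 < C ∧
      ∀ (μ : ℤ) (ω₁ ω₂ ω₃ : ℤ → ℝ≥0),
        (⨆ n : ℤ,
            ∑' p : {q : ℤ × ℤ × ℤ // GammaN α n q.1 q.2.1 q.2.2 ∧
                |PhiFrac α n q.1 q.2.1 q.2.2 - (μ : ℝ)| < 1},
              ((ω₁ p.1.1 : ℝ≥0∞) * (ω₂ p.1.2.1 : ℝ≥0∞) * (ω₃ p.1.2.2 : ℝ≥0∞)))
          ≤ ENNReal.ofReal C * (⨆ m : ℤ, (ω₁ m : ℝ≥0∞)) * (l2sZ s₁ ω₂ * l2sZ s₁ ω₃) ∧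
        (⨆ n : ℤ,
            ∑' p : {q : ℤ × ℤ × ℤ // GammaN α n q.1 q.2.1 q.2.2 ∧
                |PhiFrac α n q.1 q.2.1 q.2.2 - (μ : ℝ)| < 1},
              ((ω₁ p.1.1 : ℝ≥0∞) * (ω₂ p.1.2.1 : ℝ≥0∞) * (ω₃ p.1.2.2 : ℝ≥0∞)))
          ≤ ENNReal.ofReal C * (⨆ m : ℤ, (ω₂ m : ℝ≥0∞)) * (l2sZ s₁ ω₁ * l2sZ s₁ ω₃) ∧
        (⨆ n : ℤ,
            ∑' p : {q : ℤ × ℤ × ℤ // GammaN α n q.1 q.2.1 q.2.2 ∧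
                |PhiFrac α n q.1 q.2.1 q.2.2 - (μ : ℝ)| < 1},
              ((ω₁ p.1.1 : ℝ≥0∞) * (ω₂ p.1.2.1 : ℝ≥0∞) * (ω₃ p.1.2.2 : ℝ≥0∞)))
          ≤ ENNReal.ofReal C * (⨆ m : ℤ, (ω₃ m : ℝ≥0∞)) * (l2sZ s₁ ω₁ * l2sZ s₁ ω₂) := by
  obtain ⟨K, hK, H⟩ := FNLS.fibres α hα hα' s₁ hs₁
  refine ⟨K, hK, ?_⟩
  intro μ ω₁ ω₂ ω₃
  refine ⟨iSup_le fun n => ?_, iSup_le fun n => ?_, iSup_le fun n => ?_⟩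
  · have key := FNLS.cs_main
      (ι := {q : ℤ × ℤ × ℤ // GammaN α n q.1 q.2.1 q.2.2 ∧
                |PhiFrac α n q.1 q.2.1 q.2.2 - (μ : ℝ)| < 1})
      (fun p => p.1.2.1) (fun p => p.1.2.2) ?_ s₁ K ω₂ ω₃ ?_ ?_
    · calc _ ≤ ∑' p : {q : ℤ × ℤ × ℤ // GammaN α n q.1 q.2.1 q.2.2 ∧
                |PhiFrac α n q.1 q.2.1 q.2.2 - (μ : ℝ)| < 1},
              (⨆ m : ℤ, (ω₁ m : ℝ≥0∞)) * ((ω₂ p.1.2.1 : ℝ≥0∞) * (ω₃ p.1.2.2 : ℝ≥0∞)) := by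
            apply ENNReal.tsum_le_tsum
            intro p
            rw [mul_assoc]
            exact mul_le_mul_left (le_iSup (fun m : ℤ => (ω₁ m : ℝ≥0∞)) p.1.1) _
        _ ≤ _ := by
            rw [ENNReal.tsum_mul_left, mul_comm (ENNReal.ofReal K), mul_assoc]
            exact mul_le_mul_right key _
    · rintro ⟨⟨a, b, c⟩, hp⟩ ⟨⟨aa, bb, cc⟩, hq⟩ h1 h2
      have e1 := hp.1.1
      have e2 := hq.1.1
      simp only at h1 h2 e1 e2
      have : a = aa := by linarith
      subst h1 h2 this; rfl
    · exact fun a => ⟨_, by rintro p rfl; exact ⟨p.1.1, p.2⟩, (H μ n a).2.2⟩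
    · exact fun a => ⟨_, by rintro p rfl; exact ⟨p.1.1, p.2⟩, (H μ n a).1⟩
  · have key := FNLS.cs_main
      (ι := {q : ℤ × ℤ × ℤ // GammaN α n q.1 q.2.1 q.2.2 ∧
                |PhiFrac α n q.1 q.2.1 q.2.2 - (μ : ℝ)| < 1})
      (fun p => p.1.1) (fun p => p.1.2.2) ?_ s₁ K ω₁ ω₃ ?_ ?_
    · calc _ ≤ ∑' p : {q : ℤ × ℤ × ℤ // GammaN α n q.1 q.2.1 q.2.2 ∧
                |PhiFrac α n q.1 q.2.1 q.2.2 - (μ : ℝ)| < 1},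
              (⨆ m : ℤ, (ω₂ m : ℝ≥0∞)) * ((ω₁ p.1.1 : ℝ≥0∞) * (ω₃ p.1.2.2 : ℝ≥0∞)) := by
            apply ENNReal.tsum_le_tsum
            intro p
            rw [mul_comm (ω₁ p.1.1 : ℝ≥0∞), mul_assoc]
            exact mul_le_mul_left (le_iSup (fun m : ℤ => (ω₂ m : ℝ≥0∞)) p.1.2.1) _
        _ ≤ _ := by
            rw [ENNReal.tsum_mul_left, mul_comm (ENNReal.ofReal K), mul_assoc]
            exact mul_le_mul_right key _
    · rintro ⟨⟨a, b, c⟩, hp⟩ ⟨⟨aa, bb, cc⟩, hq⟩ h1 h2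
      have e1 := hp.1.1
      have e2 := hq.1.1
      simp only at h1 h2 e1 e2
      have : b = bb := by linarith
      subst h1 h2 this; rfl
    · exact fun a => ⟨_, by rintro p rfl; exact ⟨p.1.2.1, FNLS.PP.symm p.2⟩, (H μ n a).2.1⟩
    · exact fun a => ⟨_, by rintro p rfl; exact ⟨p.1.2.1, p.2⟩, (H μ n a).2.1⟩
  · have key := FNLS.cs_main
      (ι := {q : ℤ × ℤ × ℤ // GammaN α n q.1 q.2.1 q.2.2 ∧
                |PhiFrac α n q.1 q.2.1 q.2.2 - (μ : ℝ)| < 1})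
      (fun p => p.1.1) (fun p => p.1.2.1) ?_ s₁ K ω₁ ω₂ ?_ ?_
    · calc _ ≤ ∑' p : {q : ℤ × ℤ × ℤ // GammaN α n q.1 q.2.1 q.2.2 ∧
                |PhiFrac α n q.1 q.2.1 q.2.2 - (μ : ℝ)| < 1},
              (⨆ m : ℤ, (ω₃ m : ℝ≥0∞)) * ((ω₁ p.1.1 : ℝ≥0∞) * (ω₂ p.1.2.1 : ℝ≥0∞)) := by
            apply ENNReal.tsum_le_tsum
            intro p
            rw [mul_comm]
            exact mul_le_mul_left (le_iSup (fun m : ℤ => (ω₃ m : ℝ≥0∞)) p.1.2.2) _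
        _ ≤ _ := by
            rw [ENNReal.tsum_mul_left, mul_comm (ENNReal.ofReal K), mul_assoc]
            exact mul_le_mul_right key _
    · rintro ⟨⟨a, b, c⟩, hp⟩ ⟨⟨aa, bb, cc⟩, hq⟩ h1 h2
      have e1 := hp.1.1
      have e2 := hq.1.1
      simp only at h1 h2 e1 e2
      have : c = cc := by linarith
      subst h1 h2 this; rfl
    · exact fun a => ⟨_, by rintro p rfl; exact ⟨p.1.2.2, FNLS.PP.symm p.2⟩, (H μ n a).1⟩
    · exact fun a => ⟨_, by rintro p rfl; exact ⟨p.1.2.2, FNLS.PP.symm p.2⟩, (H μ n a).2.2⟩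
end

section
/- Fix α with 1/2 < α < 1 and let s > (1−α)/2. Then there exists C > 0 such that for all nonnegative sequences ω⁽¹⁾, ω⁽²⁾, ω⁽³⁾ : ℤ → [0,∞): ( Σ_{n ∈ ℤ} ⟨n⟩^{2s} ( Σ_{(n₁,n₂,n₃) ∈ Γ_n^R} ω⁽¹⁾_{n₁} ω⁽²⁾_{n₂} ω⁽³⁾_{n₃} )² )^{1/2} ≤ C ∏_{j=1}^{3} ‖ω⁽ʲ⁾‖_{ℓ²_s}. -/
open scoped ENNReal NNReal

/-- `(n₁,n₂,n₃) ∈ Γ_n^R = Γ_n \ Γ_n^N`. -/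
noncomputable def GammaR (α : ℝ) (n n₁ n₂ n₃ : ℤ) : Prop :=
  n₁ - n₂ + n₃ = n ∧
    ¬((|n₂ - n₁| : ℝ) > |(n₂ : ℝ)| ^ (1 - α) ∧ (|n₂ - n₃| : ℝ) > |(n₂ : ℝ)| ^ (1 - α))

theorem jbZ_one_le (n : ℤ) : 1 ≤ jbZ n := by
  unfold jbZ
  rw [Real.one_le_sqrt]
  nlinarith [sq_nonneg (n : ℝ)]

theorem jbZ_abs_le (n : ℤ) : |(n : ℝ)| ≤ jbZ n := by
  unfold jbZ
  apply Real.abs_le_sqrt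
  linarith

theorem jbZ_le (n : ℤ) : jbZ n ≤ 1 + |(n : ℝ)| := by
  unfold jbZ
  rw [Real.sqrt_le_left (by positivity)]
  nlinarith [abs_nonneg (n : ℝ), sq_abs (n : ℝ)]

theorem jbZ_mono {n m : ℤ} {c : ℝ} (hc : 1 ≤ c) (h : |(n : ℝ)| ≤ c * |(m : ℝ)|) :
    jbZ n ≤ c * jbZ m := by
  unfold jbZ
  rw [Real.sqrt_le_left (by positivity), mul_pow, Real.sq_sqrt (by positivity)]
  have h1 : |(n : ℝ)| ^ 2 ≤ (c * |(m : ℝ)|) ^ 2 := by gcongr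
  rw [mul_pow, sq_abs, sq_abs] at h1
  nlinarith

theorem jbZ_kernel1 {β s p : ℝ} (hβ : 0 < β) (hβ' : β < 1 / 2) (hs : 0 < s) (hp : β * p = 2 * s)
    (k m : ℤ) (h : |(k : ℝ)| ≤ |(m : ℝ)| ^ β) :
    1 ≤ (2 ^ p * 3 ^ s) * jbZ k ^ (-p) * (jbZ (m - k) ^ s * jbZ m ^ s) := by
  have hp0 : 0 < p := by
    by_contra hh
    push Not at hh
    nlinarith
  have hk1 := jbZ_one_le k
  have hm1 := jbZ_one_le m
  have hmk1 := jbZ_one_le (m - k)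
  have e1 : |(k : ℝ)| ≤ jbZ m ^ β :=
    h.trans (Real.rpow_le_rpow (abs_nonneg _) (jbZ_abs_le m) hβ.le)
  have e2 : jbZ k ≤ 2 * jbZ m ^ β := by
    have := Real.one_le_rpow hm1 hβ.le
    linarith [jbZ_le k]
  have e3 : jbZ m ≤ 3 * jbZ (m - k) := by
    have a1 : |(k : ℝ)| ≤ (|(m : ℝ)| + 1) / 2 := by
      rcases eq_or_ne m 0 with h0 | h0
      · subst h0
        simp [Real.zero_rpow hβ.ne'] at h
        simp [h]
      · have : (1 : ℝ) ≤ |(m : ℝ)| := by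
          have := Int.one_le_abs h0
          exact_mod_cast this
        have a2 : |(m : ℝ)| ^ β ≤ |(m : ℝ)| ^ (1 / 2 : ℝ) :=
          Real.rpow_le_rpow_of_exponent_le this hβ'.le
        rw [← Real.sqrt_eq_rpow] at a2
        have a3 := Real.sq_sqrt (abs_nonneg (m : ℝ))
        nlinarith [sq_nonneg (Real.sqrt |(m : ℝ)| - 1)]
    have a4 : |(m : ℝ)| ≤ |((m - k : ℤ) : ℝ)| + |(k : ℝ)| := by
      have := abs_add_le ((m : ℝ) - k) k
      push_cast
      simpa using this
    unfold jbZ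
    rw [Real.sqrt_le_left (by positivity), mul_pow, Real.sq_sqrt (by positivity)]
    have a5 : |(m : ℝ)| ≤ 2 * |((m - k : ℤ) : ℝ)| + 1 := by linarith
    rw [← sq_abs (m : ℝ), ← sq_abs ((m - k : ℤ) : ℝ)]
    have := abs_nonneg (m : ℝ)
    have := abs_nonneg ((m - k : ℤ) : ℝ)
    nlinarith [sq_nonneg (|((m - k : ℤ) : ℝ)| - 1)]
  have e4 : jbZ k ^ p ≤ 2 ^ p * (jbZ m ^ s * jbZ m ^ s) := by
    calc jbZ k ^ p ≤ (2 * jbZ m ^ β) ^ p := Real.rpow_le_rpow (by linarith) e2 hp0.le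
      _ = _ := by
        rw [Real.mul_rpow (by norm_num) (by positivity), ← Real.rpow_mul (by linarith), hp,
          ← Real.rpow_add (by linarith)]
        ring_nf
  have e5 : jbZ m ^ s ≤ 3 ^ s * jbZ (m - k) ^ s := by
    rw [← Real.mul_rpow (by norm_num) (by linarith)]
    exact Real.rpow_le_rpow (by linarith) e3 hs.le
  have e6 : jbZ k ^ p ≤ 2 ^ p * ((3 ^ s * jbZ (m - k) ^ s) * jbZ m ^ s) := by
    refine e4.trans ?_
    have : 0 ≤ jbZ m ^ s := by positivity
    gcongr
  have hkp : 0 < jbZ k ^ p := by positivity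
  rw [Real.rpow_neg (by linarith)]
  calc (1 : ℝ) = jbZ k ^ p * (jbZ k ^ p)⁻¹ := by field_simp
    _ ≤ (2 ^ p * ((3 ^ s * jbZ (m - k) ^ s) * jbZ m ^ s)) * (jbZ k ^ p)⁻¹ := by gcongr
    _ = _ := by ring

theorem jbZ_kernel2 {s p : ℝ} (hs : 0 < s) (hp : 2 * s ≤ p) (n k : ℤ) :
    jbZ n ^ s * jbZ k ^ (-p) ≤ 2 ^ p *
      (jbZ k ^ (-p) + jbZ n ^ (-(p / 2)) * jbZ (n + k) ^ (-(p / 2))) * jbZ (n + k) ^ s := by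
  have hk1 := jbZ_one_le k
  have hn1 := jbZ_one_le n
  have hm1 := jbZ_one_le (n + k)
  have P1 : 0 < jbZ k ^ (-p) := by positivity
  have P2 : 0 < jbZ n ^ (-(p / 2)) * jbZ (n + k) ^ (-(p / 2)) := by positivity
  have P3 : 0 < jbZ (n + k) ^ s := by positivity
  have P4 : (0 : ℝ) < 2 ^ p := by positivity
  rcases le_or_gt |(n : ℝ)| (2 * |((n + k : ℤ) : ℝ)|) with h | h
  · have h1 := jbZ_mono (by norm_num) h
    have h2 : jbZ n ^ s ≤ 2 ^ p * jbZ (n + k) ^ s := by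
      calc jbZ n ^ s ≤ (2 * jbZ (n + k)) ^ s := Real.rpow_le_rpow (by linarith) h1 hs.le
        _ = 2 ^ s * jbZ (n + k) ^ s := Real.mul_rpow (by norm_num) (by linarith)
        _ ≤ _ := by
          gcongr
          · norm_num
          · linarith
    calc _ ≤ (2 ^ p * jbZ (n + k) ^ s) * jbZ k ^ (-p) := by gcongr
      _ = 2 ^ p * (jbZ k ^ (-p) + 0) * jbZ (n + k) ^ s := by ring
      _ ≤ _ := by gcongr
  · have h1 : jbZ (n + k) ≤ jbZ n := by
      have := jbZ_mono (n := n + k) (m := n) (le_refl (1 : ℝ))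
        (by linarith [abs_nonneg ((n + k : ℤ) : ℝ)])
      linarith
    have h2 : jbZ n ≤ 2 * jbZ k := by
      apply jbZ_mono (by norm_num)
      have := abs_add_le ((n + k : ℤ) : ℝ) (-(k : ℝ))
      rw [abs_neg] at this
      push_cast at this h
      rw [add_neg_cancel_right] at this
      linarith
    have h3 : jbZ k ^ (-p) ≤ 2 ^ p * jbZ n ^ (-p) := by
      have : (2 * jbZ k) ^ (-p) ≤ jbZ n ^ (-p) :=
        Real.rpow_le_rpow_of_nonpos (by linarith) h2 (by linarith)
      rw [Real.mul_rpow (by norm_num) (by linarith), Real.rpow_neg (by norm_num)] at this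
      calc jbZ k ^ (-p) = 2 ^ p * ((2 ^ p)⁻¹ * jbZ k ^ (-p)) := by field_simp
        _ ≤ _ := by gcongr
    have h4 : jbZ n ^ (s - p / 2) ≤ jbZ (n + k) ^ (s - p / 2) :=
      Real.rpow_le_rpow_of_nonpos (by linarith) h1 (by linarith)
    calc jbZ n ^ s * jbZ k ^ (-p) ≤ jbZ n ^ s * (2 ^ p * jbZ n ^ (-p)) := by gcongr
      _ = 2 ^ p * (jbZ n ^ (-(p / 2)) * jbZ n ^ (s - p / 2)) := by
        rw [← Real.rpow_add (by linarith), mul_left_comm, ← Real.rpow_add (by linarith)]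
        ring_nf
      _ ≤ 2 ^ p * (jbZ n ^ (-(p / 2)) * jbZ (n + k) ^ (s - p / 2)) := by gcongr
      _ = 2 ^ p * (0 + jbZ n ^ (-(p / 2)) * jbZ (n + k) ^ (-(p / 2))) * jbZ (n + k) ^ s := by
        rw [show s - p / 2 = -(p / 2) + s by ring, Real.rpow_add (by linarith)]
        ring
      _ ≤ _ := by gcongr

theorem jbZ_summable {p : ℝ} (hp : 1 < p) : Summable fun n : ℤ => jbZ n ^ (-p) := by
  have h1 := Real.summable_abs_int_rpow hp
  refine Summable.of_norm_bounded_eventually h1 ?_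
  have : ∀ᶠ n : ℤ in Filter.cofinite, n ≠ 0 := by
    exact (Set.finite_singleton (0 : ℤ)).compl_mem_cofinite
  filter_upwards [this] with n hn
  have hn1 := jbZ_one_le n
  rw [Real.norm_of_nonneg (by positivity)]
  refine Real.rpow_le_rpow_of_nonpos ?_ (jbZ_abs_le n) (by linarith)
  positivity

theorem cs_tsum {ι : Type*} (f g : ι → ℝ≥0∞) :
    (∑' i, f i * g i) ^ 2 ≤ (∑' i, f i ^ 2) * ∑' i, g i ^ 2 := by
  have h : ∑' i, f i * g i ≤ (∑' i, f i ^ 2) ^ (1 / 2 : ℝ) * (∑' i, g i ^ 2) ^ (1 / 2 : ℝ) := by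
    rw [ENNReal.tsum_eq_iSup_sum]
    refine iSup_le fun t => ?_
    refine (ENNReal.inner_le_Lp_mul_Lq t f g Real.HolderConjugate.two_two).trans ?_
    simp only [ENNReal.rpow_two]
    gcongr <;> exact ENNReal.sum_le_tsum t
  calc _ ≤ ((∑' i, f i ^ 2) ^ (1 / 2 : ℝ) * (∑' i, g i ^ 2) ^ (1 / 2 : ℝ)) ^ 2 := by gcongr
    _ = _ := by
      rw [mul_pow, ← ENNReal.rpow_two, ← ENNReal.rpow_two, ← ENNReal.rpow_mul, ← ENNReal.rpow_mul]
      norm_num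

theorem sq_add_le_ennreal (a b : ℝ≥0∞) : (a + b) ^ 2 ≤ 2 * (a ^ 2 + b ^ 2) := by
  rcases eq_or_ne a ⊤ with rfl | ha
  · simp
  rcases eq_or_ne b ⊤ with rfl | hb
  · simp
  lift a to ℝ≥0 using ha
  lift b to ℝ≥0 using hb
  norm_cast
  rw [← NNReal.coe_le_coe]
  push_cast
  nlinarith [sq_nonneg ((a : ℝ) - b)]

/-- Weight in `ℝ≥0∞`. -/
noncomputable def WJ (r : ℝ) (n : ℤ) : ℝ≥0∞ := ENNReal.ofReal (jbZ n ^ r)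

theorem WJ_sq (r : ℝ) (n : ℤ) : WJ r n ^ 2 = WJ (2 * r) n := by
  have h := jbZ_one_le n
  unfold WJ
  rw [← ENNReal.ofReal_pow (by positivity), ← Real.rpow_natCast, ← Real.rpow_mul (by linarith)]
  congr 2
  push_cast
  ring

theorem WJ_tsum_ne_top {p : ℝ} (hp : 1 < p) : ∑' n, WJ (-p) n ≠ ⊤ :=
  (jbZ_summable hp).tsum_ofReal_ne_top

/-- Squared norm. -/
noncomputable def AJ (s : ℝ) (ω : ℤ → ℝ≥0) : ℝ≥0∞ := ∑' n, (WJ s n * (ω n : ℝ≥0∞)) ^ 2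

theorem l2sZ_eq (s : ℝ) (ω : ℤ → ℝ≥0) : l2sZ s ω = AJ s ω ^ (1 / 2 : ℝ) := by
  unfold l2sZ AJ
  simp only [mul_pow, WJ_sq]
  rfl

theorem tsum_shift (f : ℤ → ℝ≥0∞) (n : ℤ) : ∑' k, f (n + k) = ∑' k, f k :=
  (Equiv.addLeft n).tsum_eq f

open Classical in
/-- The piece of the sum with `|k| ≤ |m|^β`. -/
noncomputable def FJ (β : ℝ) (ω₁ ω₂ : ℤ → ℝ≥0) (k m : ℤ) : ℝ≥0∞ :=
  if |(k : ℝ)| ≤ |(m : ℝ)| ^ β then (ω₁ (m - k) : ℝ≥0∞) * ω₂ m else 0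

theorem F_bound {β s p : ℝ} (hβ : 0 < β) (hβ' : β < 1 / 2) (hs : 0 < s) (hp : β * p = 2 * s)
    (ω₁ ω₂ : ℤ → ℝ≥0) (k : ℤ) :
    ∑' m, FJ β ω₁ ω₂ k m ≤ ENNReal.ofReal (2 ^ p * 3 ^ s) * WJ (-p) k *
      (AJ s ω₁ * AJ s ω₂) ^ (1 / 2 : ℝ) := by
  have h1 : ∀ m, FJ β ω₁ ω₂ k m ≤ ENNReal.ofReal (2 ^ p * 3 ^ s) * WJ (-p) k *
      ((WJ s (m - k) * ω₁ (m - k)) * (WJ s m * ω₂ m)) := by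
    intro m
    unfold FJ
    split_ifs with h
    · have := ENNReal.ofReal_le_ofReal (jbZ_kernel1 hβ hβ' hs hp k m h)
      have a1 := jbZ_one_le k
      have a2 := jbZ_one_le m
      have a3 := jbZ_one_le (m - k)
      rw [ENNReal.ofReal_mul (by positivity), ENNReal.ofReal_mul (by positivity),
        ENNReal.ofReal_mul (p := jbZ (m - k) ^ s) (by positivity), ENNReal.ofReal_one] at this
      calc (ω₁ (m - k) : ℝ≥0∞) * ω₂ m = 1 * ((ω₁ (m - k) : ℝ≥0∞) * ω₂ m) := (one_mul _).symm
        _ ≤ _ := mul_le_mul_left this _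
        _ = _ := by unfold WJ; ring
    · exact zero_le
  refine (ENNReal.tsum_le_tsum h1).trans ?_
  rw [ENNReal.tsum_mul_left]
  gcongr
  have := cs_tsum (fun m => WJ s (m - k) * (ω₁ (m - k) : ℝ≥0∞)) (fun m => WJ s m * (ω₂ m : ℝ≥0∞))
  have e : ∑' m, (WJ s (m - k) * (ω₁ (m - k) : ℝ≥0∞)) ^ 2 = AJ s ω₁ :=
    (Equiv.subRight k).tsum_eq (fun m => (WJ s m * (ω₁ m : ℝ≥0∞)) ^ 2)
  rw [e] at this
  rw [one_div, ENNReal.le_rpow_inv_iff (by norm_num), ENNReal.rpow_two]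
  exact this

theorem conv_bound {s p : ℝ} (hs : 0 < s) (hp : 2 * s ≤ p) (ω : ℤ → ℝ≥0) :
    ∑' n, (WJ s n * ∑' k, WJ (-p) k * (ω (n + k) : ℝ≥0∞)) ^ 2 ≤
      ENNReal.ofReal (2 ^ p) ^ 2 * (2 * (2 * (∑' n, WJ (-p) n) ^ 2)) * AJ s ω := by
  set Z := ∑' n, WJ (-p) n with hZ
  set b : ℤ → ℝ≥0∞ := fun m => WJ s m * (ω m : ℝ≥0∞) with hb
  have hA : AJ s ω = ∑' m, b m ^ 2 := rfl
  have h1 : ∀ n, WJ s n * ∑' k, WJ (-p) k * (ω (n + k) : ℝ≥0∞) ≤ ENNReal.ofReal (2 ^ p) *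
      ((∑' k, WJ (-p) k * b (n + k)) + WJ (-(p / 2)) n * ∑' m, WJ (-(p / 2)) m * b m) := by
    intro n
    rw [← tsum_shift (fun m => WJ (-(p / 2)) m * b m) n, ← ENNReal.tsum_mul_left,
      ← ENNReal.tsum_mul_left, ← ENNReal.tsum_add, ← ENNReal.tsum_mul_left]
    refine ENNReal.tsum_le_tsum fun k => ?_
    have := ENNReal.ofReal_le_ofReal (jbZ_kernel2 hs hp n k)
    have a1 := jbZ_one_le n
    have a2 := jbZ_one_le k
    have a3 := jbZ_one_le (n + k)
    rw [ENNReal.ofReal_mul (by positivity), ENNReal.ofReal_mul (by positivity),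
      ENNReal.ofReal_mul (by positivity), ENNReal.ofReal_add (by positivity) (by positivity),
      ENNReal.ofReal_mul (by positivity)] at this
    calc _ = (WJ s n * WJ (-p) k) * (ω (n + k) : ℝ≥0∞) := by ring
      _ ≤ _ := mul_le_mul_left this _
      _ = _ := by simp only [hb]; unfold WJ; ring
  have h2 : ∑' n, (∑' k, WJ (-p) k * b (n + k)) ^ 2 ≤ Z ^ 2 * AJ s ω := by
    have : ∀ n, (∑' k, WJ (-p) k * b (n + k)) ^ 2 ≤ Z * ∑' k, WJ (-p) k * b (n + k) ^ 2 := by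
      intro n
      have c := cs_tsum (fun k => WJ (-(p / 2)) k) (fun k => WJ (-(p / 2)) k * b (n + k))
      simp only [mul_pow, WJ_sq, ← mul_assoc, ← sq] at c
      rwa [show 2 * -(p / 2) = -p by ring] at c
    refine (ENNReal.tsum_le_tsum this).trans ?_
    rw [ENNReal.tsum_mul_left, ENNReal.tsum_comm]
    have e : ∀ k, ∑' n, WJ (-p) k * b (n + k) ^ 2 = WJ (-p) k * AJ s ω := by
      intro k
      rw [ENNReal.tsum_mul_left, hA]
      congr 1
      exact (Equiv.addRight k).tsum_eq (fun m => b m ^ 2)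
    simp only [e]
    rw [ENNReal.tsum_mul_right, ← mul_assoc, ← sq]
  have h3 : ∑' n, (WJ (-(p / 2)) n * ∑' m, WJ (-(p / 2)) m * b m) ^ 2 ≤ Z ^ 2 * AJ s ω := by
    simp only [mul_pow, WJ_sq]
    rw [ENNReal.tsum_mul_right, show 2 * -(p / 2) = -p by ring, ← hZ, sq Z, mul_assoc]
    gcongr
    have c := cs_tsum (fun k => WJ (-(p / 2)) k) b
    simp only [WJ_sq] at c
    rwa [show 2 * -(p / 2) = -p by ring] at c
  calc _ ≤ ∑' n, ENNReal.ofReal (2 ^ p) ^ 2 * (2 * ((∑' k, WJ (-p) k * b (n + k)) ^ 2 +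
        (WJ (-(p / 2)) n * ∑' m, WJ (-(p / 2)) m * b m) ^ 2)) := by
        refine ENNReal.tsum_le_tsum fun n => ?_
        refine (pow_le_pow_left₀ (zero_le) (h1 n) 2).trans ?_
        rw [mul_pow]
        gcongr
        exact sq_add_le_ennreal _ _
    _ ≤ ENNReal.ofReal (2 ^ p) ^ 2 * (2 * (Z ^ 2 * AJ s ω + Z ^ 2 * AJ s ω)) := by
        rw [ENNReal.tsum_mul_left, ENNReal.tsum_mul_left, ENNReal.tsum_add]
        gcongr
    _ = _ := by ring

theorem T_bound {β s p : ℝ} (hβ : 0 < β) (hβ' : β < 1 / 2) (hs : 0 < s) (hp : β * p = 2 * s)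
    (hp' : 2 * s ≤ p) (ω₁ ω₂ ω₃ : ℤ → ℝ≥0) :
    ∑' n, (WJ s n * ∑' q : ℤ × ℤ, FJ β ω₁ ω₂ q.1 q.2 * (ω₃ (n + q.1) : ℝ≥0∞)) ^ 2 ≤
      ENNReal.ofReal (2 ^ p * 3 ^ s) ^ 2 *
        (ENNReal.ofReal (2 ^ p) ^ 2 * (2 * (2 * (∑' n, WJ (-p) n) ^ 2))) *
        (AJ s ω₁ * AJ s ω₂ * AJ s ω₃) := by
  set D := (AJ s ω₁ * AJ s ω₂) ^ (1 / 2 : ℝ) with hD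
  have hD2 : D ^ 2 = AJ s ω₁ * AJ s ω₂ := by
    rw [hD, ← ENNReal.rpow_two, ← ENNReal.rpow_mul]
    norm_num
  have h1 : ∀ n, WJ s n * ∑' q : ℤ × ℤ, FJ β ω₁ ω₂ q.1 q.2 * (ω₃ (n + q.1) : ℝ≥0∞) ≤
      ENNReal.ofReal (2 ^ p * 3 ^ s) * D *
        (WJ s n * ∑' k, WJ (-p) k * (ω₃ (n + k) : ℝ≥0∞)) := by
    intro n
    rw [mul_left_comm _ (WJ s n)]
    gcongr
    rw [ENNReal.tsum_prod (f := fun k m => FJ β ω₁ ω₂ k m * (ω₃ (n + k) : ℝ≥0∞)),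
      ← ENNReal.tsum_mul_left]
    refine ENNReal.tsum_le_tsum fun k => ?_
    rw [ENNReal.tsum_mul_right]
    calc _ ≤ _ := mul_le_mul_left (F_bound hβ hβ' hs hp ω₁ ω₂ k) _
      _ = _ := by ring
  calc _ ≤ ∑' n, (ENNReal.ofReal (2 ^ p * 3 ^ s) * D) ^ 2 *
        (WJ s n * ∑' k, WJ (-p) k * (ω₃ (n + k) : ℝ≥0∞)) ^ 2 := by
        refine ENNReal.tsum_le_tsum fun n => ?_
        rw [← mul_pow]
        exact pow_le_pow_left₀ (zero_le) (h1 n) 2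
    _ ≤ (ENNReal.ofReal (2 ^ p * 3 ^ s) * D) ^ 2 * (ENNReal.ofReal (2 ^ p) ^ 2 *
        (2 * (2 * (∑' n, WJ (-p) n) ^ 2)) * AJ s ω₃) := by
        rw [ENNReal.tsum_mul_left]
        gcongr
        exact conv_bound hs hp' ω₃
    _ = _ := by rw [mul_pow, hD2]; ring

theorem S_bound (α : ℝ) (n : ℤ) (ω₁ ω₂ ω₃ : ℤ → ℝ≥0) :
    (∑' p : {q : ℤ × ℤ × ℤ // GammaR α n q.1 q.2.1 q.2.2},
      ((ω₁ p.1.1 : ℝ≥0∞) * (ω₂ p.1.2.1 : ℝ≥0∞) * (ω₃ p.1.2.2 : ℝ≥0∞))) ≤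
    (∑' q : ℤ × ℤ, FJ (1 - α) ω₁ ω₂ q.1 q.2 * (ω₃ (n + q.1) : ℝ≥0∞)) +
    (∑' q : ℤ × ℤ, FJ (1 - α) ω₃ ω₂ q.1 q.2 * (ω₁ (n + q.1) : ℝ≥0∞)) := by
  have i1 : Function.Injective (fun p : {q : ℤ × ℤ × ℤ // GammaR α n q.1 q.2.1 q.2.2} =>
      ((p.1.2.1 - p.1.1, p.1.2.1) : ℤ × ℤ)) := by
    rintro ⟨⟨a, b, c⟩, h⟩ ⟨⟨a', b', c'⟩, h'⟩ he
    have h1 := h.1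
    have h2 := h'.1
    simp only [Prod.mk.injEq, Subtype.mk.injEq] at *
    omega
  have i2 : Function.Injective (fun p : {q : ℤ × ℤ × ℤ // GammaR α n q.1 q.2.1 q.2.2} =>
      ((p.1.2.1 - p.1.2.2, p.1.2.1) : ℤ × ℤ)) := by
    rintro ⟨⟨a, b, c⟩, h⟩ ⟨⟨a', b', c'⟩, h'⟩ he
    have h1 := h.1
    have h2 := h'.1
    simp only [Prod.mk.injEq, Subtype.mk.injEq] at *
    omega
  refine le_trans ?_ (add_le_add
    (ENNReal.tsum_comp_le_tsum_of_injective i1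
      (fun q : ℤ × ℤ => FJ (1 - α) ω₁ ω₂ q.1 q.2 * (ω₃ (n + q.1) : ℝ≥0∞)))
    (ENNReal.tsum_comp_le_tsum_of_injective i2
      (fun q : ℤ × ℤ => FJ (1 - α) ω₃ ω₂ q.1 q.2 * (ω₁ (n + q.1) : ℝ≥0∞))))
  rw [← ENNReal.tsum_add]
  refine ENNReal.tsum_le_tsum ?_
  rintro ⟨⟨a, b, c⟩, h⟩
  obtain ⟨h1, h2⟩ := h
  dsimp only at h1 h2 ⊢
  have e1 : b - (b - a) = a := by ring
  have e2 : b - (b - c) = c := by ring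
  have e3 : n + (b - a) = c := by omega
  have e4 : n + (b - c) = a := by omega
  rw [e3, e4]
  unfold FJ
  rw [e1, e2]
  rcases not_and_or.mp h2 with h3 | h3
  · rw [if_pos (by push_cast; exact not_lt.mp h3)]
    exact le_self_add
  · rw [if_pos (c := |((b - c : ℤ) : ℝ)| ≤ |(b : ℝ)| ^ (1 - α)) (by push_cast; exact not_lt.mp h3)]
    refine le_trans (le_of_eq ?_) le_add_self
    ring

/-- The remainder estimate for the cubic fractional NLS: for `1/2 < α < 1`
and `s > (1-α)/2`, the `ℓ²_s` norm of the trilinear form restricted to `Γ_n^R` is bounded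
by `C ∏_j ‖ω⁽ʲ⁾‖_{ℓ²_s}`. -/
theorem fractional_NLS_remainder (α : ℝ) (hα : 1/2 < α) (hα' : α < 1)
    (s : ℝ) (hs : (1 - α) / 2 < s) :
    ∃ C : ℝ, 0 < C ∧
      ∀ (ω₁ ω₂ ω₃ : ℤ → ℝ≥0),
        (∑' n : ℤ, ENNReal.ofReal (jbZ n ^ (2 * s)) *
            (∑' p : {q : ℤ × ℤ × ℤ // GammaR α n q.1 q.2.1 q.2.2},
              ((ω₁ p.1.1 : ℝ≥0∞) * (ω₂ p.1.2.1 : ℝ≥0∞) * (ω₃ p.1.2.2 : ℝ≥0∞))) ^ 2) ^ (1/2 : ℝ)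
          ≤ ENNReal.ofReal C * (l2sZ s ω₁ * l2sZ s ω₂ * l2sZ s ω₃) := by
  have hβ : 0 < 1 - α := by linarith
  have hβ' : 1 - α < 1 / 2 := by linarith
  have hs0 : 0 < s := by linarith
  set p : ℝ := 2 * s / (1 - α) with hpdef
  have hp : (1 - α) * p = 2 * s := by rw [hpdef]; field_simp
  have hp1 : 1 < p := by rw [hpdef, lt_div_iff₀ hβ]; linarith
  have hp2 : 2 * s ≤ p := by nlinarith
  set K : ℝ≥0∞ := ENNReal.ofReal (2 ^ p * 3 ^ s) ^ 2 *
        (ENNReal.ofReal (2 ^ p) ^ 2 * (2 * (2 * (∑' n, WJ (-p) n) ^ 2))) with hK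
  have hKtop : K ≠ ⊤ := by
    have := WJ_tsum_ne_top hp1
    rw [hK]
    finiteness
  have hK4 : (4 * K) ^ (1 / 2 : ℝ) ≠ ⊤ := by finiteness
  refine ⟨((4 * K) ^ (1 / 2 : ℝ)).toReal + 1, by positivity, fun ω₁ ω₂ ω₃ => ?_⟩
  have main : (∑' n : ℤ, ENNReal.ofReal (jbZ n ^ (2 * s)) *
            (∑' p : {q : ℤ × ℤ × ℤ // GammaR α n q.1 q.2.1 q.2.2},
              ((ω₁ p.1.1 : ℝ≥0∞) * (ω₂ p.1.2.1 : ℝ≥0∞) * (ω₃ p.1.2.2 : ℝ≥0∞))) ^ 2) ≤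
      (4 * K) * (AJ s ω₁ * AJ s ω₂ * AJ s ω₃) := by
    calc _ ≤ ∑' n, 2 * ((WJ s n * ∑' q : ℤ × ℤ, FJ (1 - α) ω₁ ω₂ q.1 q.2 *
              (ω₃ (n + q.1) : ℝ≥0∞)) ^ 2 + (WJ s n * ∑' q : ℤ × ℤ, FJ (1 - α) ω₃ ω₂ q.1 q.2 *
              (ω₁ (n + q.1) : ℝ≥0∞)) ^ 2) := by
          refine ENNReal.tsum_le_tsum fun n => ?_
          refine le_trans ?_ (sq_add_le_ennreal _ _)
          rw [← mul_add, mul_pow, WJ_sq]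
          exact mul_le_mul_right (pow_le_pow_left₀ (zero_le) (S_bound α n ω₁ ω₂ ω₃) 2) _
      _ ≤ 2 * (K * (AJ s ω₁ * AJ s ω₂ * AJ s ω₃) + K * (AJ s ω₃ * AJ s ω₂ * AJ s ω₁)) := by
          rw [ENNReal.tsum_mul_left, ENNReal.tsum_add]
          gcongr
          · exact T_bound hβ hβ' hs0 hp hp2 ω₁ ω₂ ω₃
          · exact T_bound hβ hβ' hs0 hp hp2 ω₃ ω₂ ω₁
      _ = _ := by ring
  refine (ENNReal.rpow_le_rpow main (by norm_num : (0 : ℝ) ≤ 1 / 2)).trans ?_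
  rw [l2sZ_eq, l2sZ_eq, l2sZ_eq, ENNReal.mul_rpow_of_nonneg (4 * K) _ (by norm_num),
    ENNReal.mul_rpow_of_nonneg (AJ s ω₁ * AJ s ω₂) _ (by norm_num),
    ENNReal.mul_rpow_of_nonneg (AJ s ω₁) _ (by norm_num)]
  gcongr
  exact (ENNReal.ofReal_toReal hK4).symm.le.trans (ENNReal.ofReal_le_ofReal (by linarith))
end

section
/- Let 1/2 < s < 1. Then there exists C > 0 such that for every n ∈ ℤ: Σ_{(n₁,n₂,n₃) ∈ ℤ³ : n₁ − n₂ + n₃ = n, n₂ ≠ n₁, n₂ ≠ n₃} n₂² ⟨n⟩^{2s} / ( |n₂−n₁| · |n₂−n₃| · ⟨n₁⟩^{2s} ⟨n₂⟩^{2s} ⟨n₃⟩^{2s} ) ≤ C. -/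
open scoped ENNReal

/-- `⟨x⟩ = (1+x²)^{1/2}`. -/
noncomputable def jbR (x : ℝ) : ℝ := Real.sqrt (1 + x ^ 2)

theorem jb_ge_one (x : ℝ) : 1 ≤ jbR x := by
  unfold jbR
  rw [Real.one_le_sqrt]
  nlinarith [sq_nonneg x]

theorem jb_pos (x : ℝ) : 0 < jbR x := lt_of_lt_of_le one_pos (jb_ge_one x)

theorem abs_le_jb (x : ℝ) : |x| ≤ jbR x := by
  unfold jbR
  apply Real.abs_le_sqrt
  linarith

theorem jb_sq (x : ℝ) : jbR x ^ 2 = 1 + x ^ 2 := by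
  unfold jbR
  exact Real.sq_sqrt (by positivity)

theorem jb_tri (x y z : ℝ) (h : |z| ≤ |x| + |y|) : jbR z ≤ jbR x + jbR y := by
  have hx := jb_sq x
  have hy := jb_sq y
  have hz := jb_sq z
  have h1 := jb_pos x
  have h2 := jb_pos y
  have h3 : |x| * |y| ≤ jbR x * jbR y :=
    mul_le_mul (abs_le_jb x) (abs_le_jb y) (abs_nonneg _) h1.le
  apply le_of_sq_le_sq _ (by positivity)
  have h4 : z ^ 2 ≤ (|x| + |y|) ^ 2 := by
    rw [← sq_abs z]
    exact pow_le_pow_left₀ (abs_nonneg _) h 2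
  nlinarith [sq_abs x, sq_abs y]

theorem jb_le_two_abs (a : ℤ) (ha : a ≠ 0) : jbR (a : ℝ) ≤ 2 * |(a : ℝ)| := by
  have h : (1 : ℝ) ≤ |(a : ℝ)| := by
    exact_mod_cast Int.one_le_abs ha
  apply le_of_sq_le_sq _ (by positivity)
  rw [jb_sq, ← sq_abs]
  nlinarith

theorem mix (x y p q : ℝ) (hx : 0 < x) (hy : 0 < y) (hp : 0 ≤ p) (hq : 0 ≤ q) :
    x ^ (-p) * y ^ (-q) ≤ x ^ (-(p + q)) + y ^ (-(p + q)) := by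
  have e1 : x ^ (-(p + q)) = x ^ (-p) * x ^ (-q) := by
    rw [← Real.rpow_add hx]; ring_nf
  have e2 : y ^ (-(p + q)) = y ^ (-p) * y ^ (-q) := by
    rw [← Real.rpow_add hy]; ring_nf
  have p1 : 0 < x ^ (-p) := Real.rpow_pos_of_pos hx _
  have p2 : 0 < x ^ (-q) := Real.rpow_pos_of_pos hx _
  have p3 : 0 < y ^ (-p) := Real.rpow_pos_of_pos hy _
  have p4 : 0 < y ^ (-q) := Real.rpow_pos_of_pos hy _
  rw [e1, e2]
  rcases le_total x y with h | h
  · have := Real.rpow_le_rpow_of_nonpos hx h (neg_nonpos.2 hq)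
    nlinarith [mul_le_mul_of_nonneg_left this p1.le, mul_pos p3 p4]
  · have := Real.rpow_le_rpow_of_nonpos hy h (neg_nonpos.2 hp)
    nlinarith [mul_le_mul_of_nonneg_right this p4.le, mul_pos p1 p2]

theorem mixN (N x y θ p q r : ℝ) (hN : 0 < N) (hx : 0 < x) (hy : 0 < y)
    (h : N ≤ x + y) (hθ : 0 ≤ θ) (hθ1 : θ ≤ 1) (hp : θ ≤ p) (hq : θ ≤ q)
    (hr : p + q - θ = r) :
    N ^ θ * (x ^ (-p) * y ^ (-q)) ≤ 2 * (x ^ (-r) + y ^ (-r)) := by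
  have h1 : N ^ θ ≤ x ^ θ + y ^ θ :=
    (Real.rpow_le_rpow hN.le h hθ).trans (Real.rpow_add_le_add_rpow hx.le hy.le hθ hθ1)
  have a1 := mix x y (p - θ) q hx hy (by linarith) (by linarith)
  have a2 := mix x y p (q - θ) hx hy (by linarith) (by linarith)
  rw [show p - θ + q = r by linarith] at a1
  rw [show p + (q - θ) = r by linarith] at a2
  have e1 : x ^ (-(p - θ)) = x ^ θ * x ^ (-p) := by
    rw [← Real.rpow_add hx]; ring_nf
  have e2 : y ^ (-(q - θ)) = y ^ θ * y ^ (-q) := by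
    rw [← Real.rpow_add hy]; ring_nf
  rw [e1] at a1
  rw [e2] at a2
  have p1 : 0 < x ^ (-p) * y ^ (-q) :=
    mul_pos (Real.rpow_pos_of_pos hx _) (Real.rpow_pos_of_pos hy _)
  nlinarith [mul_le_mul_of_nonneg_right h1 p1.le]

theorem key (s M N X Y U V : ℝ) (hs : 1 / 2 < s) (hs' : s < 1)
    (hM : 0 < M) (hN : 0 < N) (hX : 0 < X) (hY : 0 < Y) (hU : 0 < U) (hV : 0 < V)
    (h1 : M ≤ Y + U) (h2 : N ≤ X + Y) (h3 : N ≤ U + V) :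
    M ^ (2 - 2 * s) * N ^ (2 * s) * (X ^ (-1 : ℝ) * U ^ (-1 : ℝ) *
      (Y ^ (-(2 * s)) * V ^ (-(2 * s)))) ≤
      8 * ((X ^ (-(2 * s)) + Y ^ (-(2 * s))) * (U ^ (-(2 * s)) + V ^ (-(2 * s)))) := by
  have hm : M ^ (2 - 2 * s) ≤ Y ^ (2 - 2 * s) + U ^ (2 - 2 * s) :=
    (Real.rpow_le_rpow hM.le h1 (by linarith)).trans
      (Real.rpow_add_le_add_rpow hY.le hU.le (by linarith) (by linarith))
  have A := mixN N X Y 1 1 (2 * s) (2 * s) hN hX hY h2 (by linarith) (by linarith)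
    (by linarith) (by linarith) (by ring)
  have A' := mixN N U V 1 1 (2 * s) (2 * s) hN hU hV h3 (by linarith) (by linarith)
    (by linarith) (by linarith) (by ring)
  have B := mixN N U V (2 * s - 1) (2 * s - 1) (2 * s) (2 * s) hN hU hV h3 (by linarith)
    (by linarith) (by linarith) (by linarith) (by ring)
  have C := mixN N X Y (2 * s - 1) 1 (2 * (2 * s - 1)) (2 * s) hN hX hY h2 (by linarith)
    (by linarith) (by linarith) (by linarith) (by ring)
  have eN : N ^ (2 * s) = N ^ (1 : ℝ) * N ^ (2 * s - 1) := by
    rw [← Real.rpow_add hN]; ring_nf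
  have eU : U ^ (-(2 * s - 1)) = U ^ (2 - 2 * s) * U ^ (-1 : ℝ) := by
    rw [← Real.rpow_add hU]; ring_nf
  have eY : Y ^ (-(2 * (2 * s - 1))) = Y ^ (2 - 2 * s) * Y ^ (-(2 * s)) := by
    rw [← Real.rpow_add hY]; ring_nf
  rw [eU] at B
  rw [eY] at C
  have T1 := mul_le_mul A B (by positivity) (by positivity)
  have T2 := mul_le_mul C A' (by positivity) (by positivity)
  have T0 := mul_le_mul_of_nonneg_right hm
    (show 0 ≤ N ^ (2 * s) * (X ^ (-1 : ℝ) * U ^ (-1 : ℝ) *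
      (Y ^ (-(2 * s)) * V ^ (-(2 * s)))) by positivity)
  rw [eN] at T0 ⊢
  linarith

/-- the one-variable weight -/
noncomputable def FF (s : ℝ) (n a : ℤ) : ℝ :=
  jbR (a : ℝ) ^ (-(2 * s)) + jbR ((n + a : ℤ) : ℝ) ^ (-(2 * s))

theorem FF_nonneg (s : ℝ) (n a : ℤ) : 0 ≤ FF s n a := by
  have := jb_pos (a : ℝ)
  have := jb_pos ((n + a : ℤ) : ℝ)
  unfold FF
  positivity

theorem pointwise (s : ℝ) (hs : 1 / 2 < s) (hs' : s < 1) (n n1 n2 n3 : ℤ)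
    (h : n1 - n2 + n3 = n) (h1 : n2 ≠ n1) (h3 : n2 ≠ n3) :
    ((n2 : ℝ) ^ 2 * jbR (n : ℝ) ^ (2 * s)) /
            ((|n2 - n1| : ℝ) * (|n2 - n3| : ℝ) *
              jbR (n1 : ℝ) ^ (2 * s) * jbR (n2 : ℝ) ^ (2 * s) *
              jbR (n3 : ℝ) ^ (2 * s)) ≤ 32 * (FF s n (n1 - n) * FF s n (n3 - n)) := by
  have hM := jb_pos (n2 : ℝ)
  have hN := jb_pos (n : ℝ)
  have hX := jb_pos ((n1 - n : ℤ) : ℝ)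
  have hY := jb_pos (n1 : ℝ)
  have hU := jb_pos ((n3 - n : ℤ) : ℝ)
  have hV := jb_pos (n3 : ℝ)
  have hR : (n1 : ℝ) - n2 + n3 = n := by exact_mod_cast h
  have k := key s _ _ _ _ _ _ hs hs' hM hN hX hY hU hV
    (by
      apply jb_tri
      have := abs_add_le (n1 : ℝ) ((n3 - n : ℤ) : ℝ)
      refine le_trans (le_of_eq ?_) this
      congr 1
      push_cast; linarith)
    (by
      apply jb_tri
      have := abs_sub (n1 : ℝ) ((n1 - n : ℤ) : ℝ)
      rw [add_comm]
      refine le_trans (le_of_eq ?_) this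
      congr 1
      push_cast; linarith)
    (by
      apply jb_tri
      have := abs_sub (n3 : ℝ) ((n3 - n : ℤ) : ℝ)
      rw [add_comm]
      refine le_trans (le_of_eq ?_) this
      congr 1
      push_cast; linarith)
  have b1 := jb_le_two_abs (n1 - n) (by omega)
  have b3 := jb_le_two_abs (n3 - n) (by omega)
  have e1 : |(n2 : ℝ) - n1| = |((n3 - n : ℤ) : ℝ)| := by
    congr 1; push_cast; linarith
  have e3 : |(n2 : ℝ) - n3| = |((n1 - n : ℤ) : ℝ)| := by
    congr 1; push_cast; linarith
  have m2 : (n2 : ℝ) ^ 2 ≤ jbR (n2 : ℝ) ^ (2 - 2 * s) * jbR (n2 : ℝ) ^ (2 * s) := by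
    rw [← Real.rpow_add hM]
    have : jbR (n2 : ℝ) ^ (2 - 2 * s + 2 * s) = jbR (n2 : ℝ) ^ 2 := by
      rw [← Real.rpow_natCast]; congr 1; push_cast; ring
    rw [this, jb_sq]; linarith
  unfold FF
  rw [e1, e3, show n + (n1 - n) = n1 by ring, show n + (n3 - n) = n3 by ring]
  set M := jbR (n2 : ℝ)
  set N := jbR (n : ℝ)
  set X := jbR ((n1 - n : ℤ) : ℝ)
  set Y := jbR (n1 : ℝ)
  set U := jbR ((n3 - n : ℤ) : ℝ)
  set V := jbR (n3 : ℝ)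
  set a := |((n1 - n : ℤ) : ℝ)|
  set b := |((n3 - n : ℤ) : ℝ)|
  have ha : 0 < a := by linarith
  have hb : 0 < b := by linarith
  calc _ ≤ (M ^ (2 - 2 * s) * M ^ (2 * s)) * N ^ (2 * s) /
        ((U / 2) * (X / 2) * Y ^ (2 * s) * M ^ (2 * s) * V ^ (2 * s)) := by
        gcongr <;> linarith
    _ = 4 * (M ^ (2 - 2 * s) * N ^ (2 * s) * (X ^ (-1 : ℝ) * U ^ (-1 : ℝ) *
      (Y ^ (-(2 * s)) * V ^ (-(2 * s))))) := by
        rw [Real.rpow_neg hY.le, Real.rpow_neg hV.le, Real.rpow_neg_one, Real.rpow_neg_one]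
        field_simp
        try norm_num
    _ ≤ _ := by linarith

theorem jb_summable (s : ℝ) (hs : 1 / 2 < s) :
    Summable (fun a : ℤ => jbR (a : ℝ) ^ (-(2 * s))) := by
  have h := Real.summable_abs_int_rpow (b := 2 * s) (by linarith)
  refine Summable.of_norm_bounded_eventually h ?_
  have : ∀ᶠ a : ℤ in Filter.cofinite, a ≠ 0 := by
    exact Filter.eventually_cofinite_ne 0
  filter_upwards [this] with a ha
  have hp := jb_pos (a : ℝ)
  rw [Real.norm_of_nonneg (by positivity)]
  apply Real.rpow_le_rpow_of_nonpos _ (abs_le_jb _) (by linarith)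
  have : (a : ℝ) ≠ 0 := by exact_mod_cast ha
  positivity

theorem FF_hasSum (s : ℝ) (hs : 1 / 2 < s) (n : ℤ) :
    HasSum (FF s n) (2 * ∑' a : ℤ, jbR (a : ℝ) ^ (-(2 * s))) := by
  have h := (jb_summable s hs).hasSum
  have h2 := (Equiv.addLeft n).hasSum_iff.2 h
  rw [two_mul]
  exact h.add h2

/-- For `1/2 < s < 1` there is `C > 0` such that, uniformly in `n ∈ ℤ`,
`Σ_{n₁-n₂+n₃=n, n₂≠n₁, n₂≠n₃} n₂² ⟨n⟩^{2s} / (|n₂-n₁| |n₂-n₃| ⟨n₁⟩^{2s} ⟨n₂⟩^{2s} ⟨n₃⟩^{2s}) ≤ C`. -/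
theorem DNLS_weight_sum_bound (s : ℝ) (hs : 1/2 < s) (hs' : s < 1) :
    ∃ C : ℝ, 0 < C ∧
      ∀ n : ℤ,
        (∑' p : {q : ℤ × ℤ × ℤ //
            q.1 - q.2.1 + q.2.2 = n ∧ q.2.1 ≠ q.1 ∧ q.2.1 ≠ q.2.2},
          ENNReal.ofReal (((p.1.2.1 : ℝ) ^ 2 * jbR (n : ℝ) ^ (2 * s)) /
            ((|p.1.2.1 - p.1.1| : ℝ) * (|p.1.2.1 - p.1.2.2| : ℝ) *
              jbR (p.1.1 : ℝ) ^ (2 * s) * jbR (p.1.2.1 : ℝ) ^ (2 * s) *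
              jbR (p.1.2.2 : ℝ) ^ (2 * s))))
          ≤ ENNReal.ofReal C := by
  set S := ∑' a : ℤ, jbR (a : ℝ) ^ (-(2 * s)) with hS
  refine ⟨32 * ((2 * S) * (2 * S)) + 1, ?_, ?_⟩
  · nlinarith [mul_self_nonneg (2 * S)]
  intro n
  have hf := FF_hasSum s hs n
  have hsum : HasSum (fun p : ℤ × ℤ => 32 * (FF s n p.1 * FF s n p.2))
      (32 * ((2 * S) * (2 * S))) := by
    apply HasSum.mul_left
    exact hf.mul hf (hf.summable.mul_of_nonneg hf.summable (FF_nonneg s n) (FF_nonneg s n))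
  let φ : {q : ℤ × ℤ × ℤ //
      q.1 - q.2.1 + q.2.2 = n ∧ q.2.1 ≠ q.1 ∧ q.2.1 ≠ q.2.2} → ℤ × ℤ :=
    fun p => (p.1.1 - n, p.1.2.2 - n)
  have hφ : Function.Injective φ := by
    rintro ⟨⟨a, b, c⟩, h, _⟩ ⟨⟨a', b', c'⟩, h', _⟩ e
    simp only [φ, Prod.mk.injEq] at e
    simp only at h h'
    simp only [Subtype.mk.injEq, Prod.mk.injEq]
    omega
  calc _ ≤ ∑' p, ENNReal.ofReal (32 * (FF s n (φ p).1 * FF s n (φ p).2)) := by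
        apply ENNReal.tsum_le_tsum
        rintro ⟨⟨a, b, c⟩, h, h1, h3⟩
        exact ENNReal.ofReal_le_ofReal (pointwise s hs hs' n a b c h h1 h3)
    _ ≤ ∑' p : ℤ × ℤ, ENNReal.ofReal (32 * (FF s n p.1 * FF s n p.2)) :=
        ENNReal.tsum_comp_le_tsum_of_injective hφ
          (fun p : ℤ × ℤ => ENNReal.ofReal (32 * (FF s n p.1 * FF s n p.2)))
    _ = ENNReal.ofReal (32 * ((2 * S) * (2 * S))) := by
        rw [← hsum.tsum_eq, ENNReal.ofReal_tsum_of_nonneg _ hsum.summable]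
        intro p
        have := FF_nonneg s n p.1
        have := FF_nonneg s n p.2
        positivity
    _ ≤ _ := ENNReal.ofReal_le_ofReal (by linarith)
end
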